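/- For integers n ≥ ω ≥ 0 of opposite parity, the curve c_{ω,n}, with k = (n + ω − 1)/2 crossings along its middle horizontal line and l = (n − ω + 1)/2 empty outward 1-gons along its outer circle, has exactly n crossings, Whitney winding number ω, and satisfies f^X(c_{ω,n}) = Σ_{i=1}^{k} X_{l+i−1, i−k} + l·X_{0, l−1−k}. -/

import Mathlib

open Set
open scoped ENNReal

noncomputable section

namespace CurvePaper


/-- The determinant of two vectors in the plane `ℝ² ≅ ℂ`. -/
def det2 (u v : ℂ) : ℝ := u.re * v.im - u.im * v.re

/-- The determinant of three vectors in `ℝ³`. -/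
def det3 (a b c : EuclideanSpace ℝ (Fin 3)) : ℝ :=
  a 0 * (b 1 * c 2 - b 2 * c 1) - a 1 * (b 0 * c 2 - b 2 * c 0) + a 2 * (b 0 * c 1 - b 1 * c 0)

/-- The homomorphism `φ : 𝕏 → ℤ`, `X_{a,b} ↦ a - b`, on the free abelian group `𝕏`
with basis `{X_{a,b} : a b ∈ ℤ}`. -/
def phi : FreeAbelianGroup (ℤ × ℤ) →+ ℤ :=
  FreeAbelianGroup.lift fun p : ℤ × ℤ => p.1 - p.2

/-! ### Planar curves -/

/-- A closed planar curve: a smooth immersion of the circle `ℝ/ℤ` into the plane. -/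
structure PlanarCurve : Type where
  toFun : ℝ → ℂ
  periodic : Function.Periodic toFun 1
  smooth : ContDiff ℝ (⊤ : ℕ∞) toFun
  immersion : ∀ t : ℝ, deriv toFun t ≠ 0

namespace PlanarCurve

/-- The number of parameters in one period mapping to a given point. -/
def multF (f : ℝ → ℂ) (p : ℂ) : ℕ := Set.ncard {t ∈ Set.Ico (0:ℝ) 1 | f t = p}

/-- All self-intersections of `f` at the point `p` are transverse. -/
def TransverseF (f : ℝ → ℂ) (p : ℂ) : Prop :=
  ∀ s ∈ Set.Ico (0:ℝ) 1, ∀ t ∈ Set.Ico (0:ℝ) 1, s ≠ t → f s = p → f t = p →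
    det2 (deriv f s) (deriv f t) ≠ 0

/-- The set of self-intersection points of a parametrized curve. -/
def crossingSetF (f : ℝ → ℂ) : Set ℂ := {p : ℂ | 2 ≤ multF f p}

/-- A parametrized curve is stable if its only self-intersections are finitely many
transverse double points. -/
def StableF (f : ℝ → ℂ) : Prop :=
  (crossingSetF f).Finite ∧ ∀ p : ℂ, multF f p ≤ 2 ∧ (multF f p = 2 → TransverseF f p)

/-- A planar curve is stable if its only self-intersections are transverse double points. -/
def Stable (c : PlanarCurve) : Prop := StableF c.toFun

/-- The number of crossings (self-intersection points) of a planar curve. -/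
def crossings (c : PlanarCurve) : ℕ := (crossingSetF c.toFun).ncard

/-- `c` has Whitney winding number `ω`: the degree of the normalized derivative map
`S¹ → S¹`, expressed via a continuous lift of its angle. -/
def HasWhitney (c : PlanarCurve) (ω : ℤ) : Prop :=
  ∃ θ : ℝ → ℝ, Continuous θ ∧
    (∀ t : ℝ, deriv c.toFun t = (‖deriv c.toFun t‖ : ℂ) * Complex.exp ((θ t : ℂ) * Complex.I)) ∧
    θ 1 - θ 0 = 2 * Real.pi * (ω : ℝ)

/-- `H` is a regular homotopy between parametrized curves `f` and `g`:
a continuously varying family of immersed closed curves. -/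
def IsRegHomotopy (f g : ℝ → ℂ) (H : ℝ → ℝ → ℂ) : Prop :=
  (Continuous fun q : ℝ × ℝ => H q.1 q.2) ∧
  (Continuous fun q : ℝ × ℝ => deriv (H q.1) q.2) ∧
  (∀ s : ℝ, Function.Periodic (H s) 1) ∧
  (∀ s : ℝ, ContDiff ℝ (⊤ : ℕ∞) (H s)) ∧
  (∀ s t : ℝ, deriv (H s) t ≠ 0) ∧
  H 0 = f ∧ H 1 = g

/-- Two planar curves are regularly homotopic. -/
def RegularlyHomotopic (c c' : PlanarCurve) : Prop :=
  ∃ H, IsRegHomotopy c.toFun c'.toFun H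

/-- Two planar curves are homotopic through *stable* immersed curves. -/
def StablyHomotopic (c c' : PlanarCurve) : Prop :=
  ∃ H, IsRegHomotopy c.toFun c'.toFun H ∧ ∀ s ∈ Set.Icc (0:ℝ) 1, StableF (H s)

/-- A point of a curve which is either a regular point or a transverse double point. -/
def StablePointF (f : ℝ → ℂ) (p : ℂ) : Prop :=
  multF f p ≤ 1 ∨ (multF f p = 2 ∧ TransverseF f p)

/-- A curve exhibiting a single `J`-type singularity (a first-order tangency of two
strands), all other points being stable. -/
def JSingF (f : ℝ → ℂ) : Prop :=
  ∃ p : ℂ, multF f p = 2 ∧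
    (∀ s ∈ Set.Ico (0:ℝ) 1, ∀ t ∈ Set.Ico (0:ℝ) 1, s ≠ t → f s = p → f t = p →
      ∃ r : ℝ, r ≠ 0 ∧ deriv f t = (r : ℂ) * deriv f s ∧
        det2 (deriv f s) (iteratedDeriv 2 f s) * ‖deriv f t‖ ^ 3 ≠
          (if 0 < r then 1 else -1) * det2 (deriv f t) (iteratedDeriv 2 f t) * ‖deriv f s‖ ^ 3) ∧
    (∀ q : ℂ, q ≠ p → StablePointF f q) ∧ (crossingSetF f).Finite

/-- A curve exhibiting a single `S`-type singularity (three strands meeting at one point,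
pairwise transversally), all other points being stable. -/
def SSingF (f : ℝ → ℂ) : Prop :=
  ∃ p : ℂ, multF f p = 3 ∧ TransverseF f p ∧
    (∀ q : ℂ, q ≠ p → StablePointF f q) ∧ (crossingSetF f).Finite

/-- A `J` move: a regular homotopy between stable curves passing through exactly one
singular moment, of `J`-type. -/
def JMove (c c' : PlanarCurve) : Prop :=
  c.Stable ∧ c'.Stable ∧ ∃ H, IsRegHomotopy c.toFun c'.toFun H ∧
    ∃ s₀ ∈ Set.Ioo (0:ℝ) 1, (∀ s ∈ Set.Icc (0:ℝ) 1, s ≠ s₀ → StableF (H s)) ∧ JSingF (H s₀)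

/-- An `S` move: a regular homotopy between stable curves passing through exactly one
singular moment, of `S`-type. -/
def SMove (c c' : PlanarCurve) : Prop :=
  c.Stable ∧ c'.Stable ∧ ∃ H, IsRegHomotopy c.toFun c'.toFun H ∧
    ∃ s₀ ∈ Set.Ioo (0:ℝ) 1, (∀ s ∈ Set.Icc (0:ℝ) 1, s ≠ s₀ → StableF (H s)) ∧ SSingF (H s₀)

/-- A basic move is a `J` move or an `S` move. -/
def BasicMove (c c' : PlanarCurve) : Prop := JMove c c' ∨ SMove c c'

/-- An increasing `J` move adds two crossings. -/
def IncreasingJMove (c c' : PlanarCurve) : Prop :=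
  JMove c c' ∧ c'.crossings = c.crossings + 2

/-- A decreasing `J` move removes two crossings. -/
def DecreasingJMove (c c' : PlanarCurve) : Prop :=
  JMove c c' ∧ c.crossings = c'.crossings + 2

/-- A `Z` move: the composite of an increasing `J` move, an `S` move and a decreasing
`J` move (sliding an empty 1-gon past a transverse strand). -/
def ZMove (c c' : PlanarCurve) : Prop :=
  ∃ c₁ c₂, IncreasingJMove c c₁ ∧ SMove c₁ c₂ ∧ DecreasingJMove c₂ c'

/-- A sequence of `k` basic moves leading from `c` to `c'` (allowing an initial
deformation through stable curves). -/
def ChainFromTo (c c' : PlanarCurve) (seq : ℕ → PlanarCurve) (k : ℕ) : Prop :=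
  StablyHomotopic c (seq 0) ∧ seq k = c' ∧ ∀ i < k, BasicMove (seq i) (seq (i+1))

/-- The distance between two curves: the minimal number of basic moves needed to pass
from `c` to `c'` (`⊤` if they are not regularly homotopic). -/
def dist (c c' : PlanarCurve) : ℕ∞ :=
  sInf {m : ℕ∞ | ∃ k : ℕ, m = (k : ℕ∞) ∧ ∃ seq : ℕ → PlanarCurve, ChainFromTo c c' seq k}

/-- The diameter of a set of curves. -/
def diam (A : Set PlanarCurve) : ℕ∞ := ⨆ c ∈ A, ⨆ c' ∈ A, dist c c'

/-- `B^ω_n`: the set of all stable planar curves with Whitney number `ω` and at most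
`n` crossings. -/
def B (ω : ℤ) (n : ℕ) : Set PlanarCurve :=
  {c : PlanarCurve | c.Stable ∧ c.HasWhitney ω ∧ c.crossings ≤ n}

/-- A step of the algorithm: an `S` move, a decreasing `J` move, or a `Z` move whose two
intermediate curves have at most `N` crossings; `w` is the number of basic moves used. -/
def AlgStep (N : ℕ) (c c' : PlanarCurve) (w : ℕ) : Prop :=
  (SMove c c' ∧ w = 1) ∨ (DecreasingJMove c c' ∧ w = 1) ∨
  ((∃ c₁ c₂, IncreasingJMove c c₁ ∧ SMove c₁ c₂ ∧ DecreasingJMove c₂ c' ∧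
      c₁.crossings ≤ N ∧ c₂.crossings ≤ N) ∧ w = 3)

/-! #### The invariant `f^X` -/

/-- The set of parameter pairs (in one period) realizing the double points of a curve. -/
def crossingPairsF (f : ℝ → ℂ) : Set (ℝ × ℝ) :=
  {q : ℝ × ℝ | q.1 ∈ Set.Ico (0:ℝ) 1 ∧ q.2 ∈ Set.Ico (0:ℝ) 1 ∧ q.1 < q.2 ∧ f q.1 = f q.2}

/-- The sign `i(v) ∈ {1,-1}` of a double point visited first at time `s` and then at
time `t`: `1` iff the tangents, in the order visited, form a positive basis. -/
def crossSign (f : ℝ → ℂ) (s t : ℝ) : ℤ :=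
  if 0 < det2 (deriv f s) (deriv f t) then 1 else -1

/-- The index `i(e)` of the subarc `e` of `f` on the parameter interval `(α, β)`:
the sum of the signs of the double points of `e`. -/
def arcIndex (f : ℝ → ℂ) (α β : ℝ) : ℤ :=
  ∑ᶠ q ∈ {q : ℝ × ℝ | q.1 ∈ Set.Ioo α β ∧ q.2 ∈ Set.Ioo α β ∧ q.1 < q.2 ∧ f q.1 = f q.2},
    crossSign f q.1 q.2

/-- The order one invariant `f^X(c) = ∑_v X_{a(v),b(v)} ∈ 𝕏`, where for each double
point `v` the two arcs of `c` based at `v` are ordered by the orientation of the tangents. -/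
def fX (c : PlanarCurve) : FreeAbelianGroup (ℤ × ℤ) :=
  ∑ᶠ q ∈ crossingPairsF c.toFun,
    if 0 < det2 (deriv c.toFun q.1) (deriv c.toFun q.2) then
      FreeAbelianGroup.of (arcIndex c.toFun q.1 q.2, arcIndex c.toFun q.2 (q.1 + 1))
    else
      FreeAbelianGroup.of (arcIndex c.toFun q.2 (q.1 + 1), arcIndex c.toFun q.1 q.2)

/-- The integer valued invariant `g = φ ∘ f^X`. -/
def g (c : PlanarCurve) : ℤ := phi (fX c)

/-! #### The standard curves `δ_ω` -/

/-- An explicit stable curve with winding number `m ≥ 1` and `m - 1` (inward) loops. -/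
def deltaFunPos (m : ℕ) : ℝ → ℂ := fun t =>
  Complex.exp (((2 * Real.pi * (m : ℝ) * t : ℝ) : ℂ) * Complex.I) +
    ((2 * (m : ℝ) / 3 : ℝ) : ℂ) * Complex.exp (((2 * Real.pi * t : ℝ) : ℂ) * Complex.I)

/-- The standard planar curve `δ_ω` with Whitney number `ω` and `||ω|-1|` crossings:
for `ω = 0` a figure eight, and for `ω ≠ 0` a round circle with `|ω| - 1` small loops. -/
def deltaFun (ω : ℤ) : ℝ → ℂ :=
  if ω = 0 then
    fun t => ((Real.sin (2 * Real.pi * t) : ℝ) : ℂ) + ((Real.sin (4 * Real.pi * t) : ℝ) : ℂ) * Complex.I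
  else if 0 < ω then deltaFunPos ω.toNat
  else fun t => (starRingEnd ℂ) (deltaFunPos (-ω).toNat t)

end PlanarCurve


/-! ### Spherical curves -/


/-- A closed spherical curve: a smooth immersion of the circle `ℝ/ℤ` into the unit
sphere `S² ⊆ ℝ³`. -/
structure SphericalCurve : Type where
  toFun : ℝ → EuclideanSpace ℝ (Fin 3)
  norm_one : ∀ t : ℝ, ‖toFun t‖ = 1
  periodic : Function.Periodic toFun 1
  smooth : ContDiff ℝ (⊤ : ℕ∞) toFun
  immersion : ∀ t : ℝ, deriv toFun t ≠ 0

namespace SphericalCurve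

def multF (f : ℝ → EuclideanSpace ℝ (Fin 3)) (p : EuclideanSpace ℝ (Fin 3)) : ℕ :=
  Set.ncard {t ∈ Set.Ico (0:ℝ) 1 | f t = p}

/-- Transversality of the branches at `p`: tangent vectors at `p` are pairwise
independent, detected by the `3×3` determinant with the base point `p` (the outward
normal of the sphere, fixing its orientation). -/
def TransverseF (f : ℝ → EuclideanSpace ℝ (Fin 3)) (p : EuclideanSpace ℝ (Fin 3)) : Prop :=
  ∀ s ∈ Set.Ico (0:ℝ) 1, ∀ t ∈ Set.Ico (0:ℝ) 1, s ≠ t → f s = p → f t = p →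
    det3 p (deriv f s) (deriv f t) ≠ 0

def crossingSetF (f : ℝ → EuclideanSpace ℝ (Fin 3)) : Set (EuclideanSpace ℝ (Fin 3)) :=
  {p | 2 ≤ multF f p}

def StableF (f : ℝ → EuclideanSpace ℝ (Fin 3)) : Prop :=
  (crossingSetF f).Finite ∧ ∀ p, multF f p ≤ 2 ∧ (multF f p = 2 → TransverseF f p)

def Stable (c : SphericalCurve) : Prop := StableF c.toFun

def crossings (c : SphericalCurve) : ℕ := (crossingSetF c.toFun).ncard

/-- The curve as a map into the sphere as a subtype. -/
def pt (c : SphericalCurve) (t : ℝ) : Metric.sphere (0 : EuclideanSpace ℝ (Fin 3)) 1 :=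
  ⟨c.toFun t, mem_sphere_zero_iff_norm.mpr (c.norm_one t)⟩

/-- The planar curve obtained from `c` by deleting the point `v ∈ S²` not on `c`
(stereographic projection from `v`). -/
def proj (c : SphericalCurve) (v : Metric.sphere (0 : EuclideanSpace ℝ (Fin 3)) 1) :
    ℝ → EuclideanSpace ℝ (Fin 2) :=
  haveI : Fact (Module.finrank ℝ (EuclideanSpace ℝ (Fin 3)) = 2 + 1) := ⟨by simp⟩
  fun t => stereographic' 2 v (c.pt t)

/-- `c` has (spherical) Whitney number `ω ∈ ℤ/2`: the parity of the winding number of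
the planar curve obtained by deleting from `S²` a point in the complement of `c`. -/
def HasWhitney (c : SphericalCurve) (ω : ZMod 2) : Prop :=
  ∃ v : Metric.sphere (0 : EuclideanSpace ℝ (Fin 3)) 1,
    (∀ t : ℝ, c.toFun t ≠ (v : EuclideanSpace ℝ (Fin 3))) ∧
    ∃ (m : ℤ) (θ : ℝ → ℝ), Continuous θ ∧
      (∀ t : ℝ, deriv (c.proj v) t =
        ‖deriv (c.proj v) t‖ •
          ((WithLp.equiv 2 (Fin 2 → ℝ)).symm ![Real.cos (θ t), Real.sin (θ t)])) ∧
      θ 1 - θ 0 = 2 * Real.pi * (m : ℝ) ∧ ω = (m : ZMod 2)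

def IsRegHomotopy (f g : ℝ → EuclideanSpace ℝ (Fin 3))
    (H : ℝ → ℝ → EuclideanSpace ℝ (Fin 3)) : Prop :=
  (Continuous fun q : ℝ × ℝ => H q.1 q.2) ∧
  (Continuous fun q : ℝ × ℝ => deriv (H q.1) q.2) ∧
  (∀ s t : ℝ, ‖H s t‖ = 1) ∧
  (∀ s : ℝ, Function.Periodic (H s) 1) ∧
  (∀ s : ℝ, ContDiff ℝ (⊤ : ℕ∞) (H s)) ∧
  (∀ s t : ℝ, deriv (H s) t ≠ 0) ∧
  H 0 = f ∧ H 1 = g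

def RegularlyHomotopic (c c' : SphericalCurve) : Prop :=
  ∃ H, IsRegHomotopy c.toFun c'.toFun H

def StablyHomotopic (c c' : SphericalCurve) : Prop :=
  ∃ H, IsRegHomotopy c.toFun c'.toFun H ∧ ∀ s ∈ Set.Icc (0:ℝ) 1, StableF (H s)

def StablePointF (f : ℝ → EuclideanSpace ℝ (Fin 3)) (p : EuclideanSpace ℝ (Fin 3)) : Prop :=
  multF f p ≤ 1 ∨ (multF f p = 2 ∧ TransverseF f p)

def JSingF (f : ℝ → EuclideanSpace ℝ (Fin 3)) : Prop :=
  ∃ p : EuclideanSpace ℝ (Fin 3), multF f p = 2 ∧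
    (∀ s ∈ Set.Ico (0:ℝ) 1, ∀ t ∈ Set.Ico (0:ℝ) 1, s ≠ t → f s = p → f t = p →
      ∃ r : ℝ, r ≠ 0 ∧ deriv f t = r • deriv f s ∧
        det3 p (deriv f s) (iteratedDeriv 2 f s) * ‖deriv f t‖ ^ 3 ≠
          (if 0 < r then 1 else -1) * det3 p (deriv f t) (iteratedDeriv 2 f t) * ‖deriv f s‖ ^ 3) ∧
    (∀ q, q ≠ p → StablePointF f q) ∧ (crossingSetF f).Finite

def SSingF (f : ℝ → EuclideanSpace ℝ (Fin 3)) : Prop :=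
  ∃ p : EuclideanSpace ℝ (Fin 3), multF f p = 3 ∧ TransverseF f p ∧
    (∀ q, q ≠ p → StablePointF f q) ∧ (crossingSetF f).Finite

def JMove (c c' : SphericalCurve) : Prop :=
  c.Stable ∧ c'.Stable ∧ ∃ H, IsRegHomotopy c.toFun c'.toFun H ∧
    ∃ s₀ ∈ Set.Ioo (0:ℝ) 1, (∀ s ∈ Set.Icc (0:ℝ) 1, s ≠ s₀ → StableF (H s)) ∧ JSingF (H s₀)

def SMove (c c' : SphericalCurve) : Prop :=
  c.Stable ∧ c'.Stable ∧ ∃ H, IsRegHomotopy c.toFun c'.toFun H ∧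
    ∃ s₀ ∈ Set.Ioo (0:ℝ) 1, (∀ s ∈ Set.Icc (0:ℝ) 1, s ≠ s₀ → StableF (H s)) ∧ SSingF (H s₀)

def BasicMove (c c' : SphericalCurve) : Prop := JMove c c' ∨ SMove c c'

def IncreasingJMove (c c' : SphericalCurve) : Prop :=
  JMove c c' ∧ c'.crossings = c.crossings + 2

def DecreasingJMove (c c' : SphericalCurve) : Prop :=
  JMove c c' ∧ c.crossings = c'.crossings + 2

def ZMove (c c' : SphericalCurve) : Prop :=
  ∃ c₁ c₂, IncreasingJMove c c₁ ∧ SMove c₁ c₂ ∧ DecreasingJMove c₂ c'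

def ChainFromTo (c c' : SphericalCurve) (seq : ℕ → SphericalCurve) (k : ℕ) : Prop :=
  StablyHomotopic c (seq 0) ∧ seq k = c' ∧ ∀ i < k, BasicMove (seq i) (seq (i+1))

def dist (c c' : SphericalCurve) : ℕ∞ :=
  sInf {m : ℕ∞ | ∃ k : ℕ, m = (k : ℕ∞) ∧ ∃ seq : ℕ → SphericalCurve, ChainFromTo c c' seq k}

def diam (A : Set SphericalCurve) : ℕ∞ := ⨆ c ∈ A, ⨆ c' ∈ A, dist c c'

def B (ω : ZMod 2) (n : ℕ) : Set SphericalCurve :=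
  {c : SphericalCurve | c.Stable ∧ c.HasWhitney ω ∧ c.crossings ≤ n}

def AlgStep (N : ℕ) (c c' : SphericalCurve) (w : ℕ) : Prop :=
  (SMove c c' ∧ w = 1) ∨ (DecreasingJMove c c' ∧ w = 1) ∨
  ((∃ c₁ c₂, IncreasingJMove c c₁ ∧ SMove c₁ c₂ ∧ DecreasingJMove c₂ c' ∧
      c₁.crossings ≤ N ∧ c₂.crossings ≤ N) ∧ w = 3)

/-! #### The invariant `f^X` for spherical curves -/

def crossingPairsF (f : ℝ → EuclideanSpace ℝ (Fin 3)) : Set (ℝ × ℝ) :=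
  {q : ℝ × ℝ | q.1 ∈ Set.Ico (0:ℝ) 1 ∧ q.2 ∈ Set.Ico (0:ℝ) 1 ∧ q.1 < q.2 ∧ f q.1 = f q.2}

def crossSign (f : ℝ → EuclideanSpace ℝ (Fin 3)) (s t : ℝ) : ℤ :=
  if 0 < det3 (f s) (deriv f s) (deriv f t) then 1 else -1

def arcIndex (f : ℝ → EuclideanSpace ℝ (Fin 3)) (α β : ℝ) : ℤ :=
  ∑ᶠ q ∈ {q : ℝ × ℝ | q.1 ∈ Set.Ioo α β ∧ q.2 ∈ Set.Ioo α β ∧ q.1 < q.2 ∧ f q.1 = f q.2},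
    crossSign f q.1 q.2

def fX (c : SphericalCurve) : FreeAbelianGroup (ℤ × ℤ) :=
  ∑ᶠ q ∈ crossingPairsF c.toFun,
    if 0 < det3 (c.toFun q.1) (deriv c.toFun q.1) (deriv c.toFun q.2) then
      FreeAbelianGroup.of (arcIndex c.toFun q.1 q.2, arcIndex c.toFun q.2 (q.1 + 1))
    else
      FreeAbelianGroup.of (arcIndex c.toFun q.2 (q.1 + 1), arcIndex c.toFun q.1 q.2)

def g (c : SphericalCurve) : ℤ := phi (fX c)

/-- Inverse stereographic projection `ℂ → S²` from the north pole. -/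
def stereoInv (z : ℂ) : EuclideanSpace ℝ (Fin 3) :=
  (WithLp.equiv 2 (Fin 3 → ℝ)).symm
    ![2 * z.re / (Complex.normSq z + 1), 2 * z.im / (Complex.normSq z + 1),
      (Complex.normSq z - 1) / (Complex.normSq z + 1)]

/-- The standard spherical curves `δ_0` (one crossing) and `δ_1` (embedded):
the images in `S²` of the standard planar curves `δ_0`, `δ_1`. -/
def deltaFun (ω : ZMod 2) : ℝ → EuclideanSpace ℝ (Fin 3) :=
  fun t => stereoInv (PlanarCurve.deltaFun (if ω = 0 then 0 else 1) t)

end SphericalCurve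


/-- The determinant of two vectors in `ℝ × ℝ`. -/
def det2P (u v : ℝ × ℝ) : ℝ := u.1 * v.2 - u.2 * v.1

/-- The closed region bounded by a subset of the plane: the set together with all the
bounded connected components of its complement. -/
def closedRegion (S : Set ℂ) : Set ℂ :=
  S ∪ {p : ℂ | p ∉ S ∧ Bornology.IsBounded (connectedComponentIn Sᶜ p)}

lemma fsum_of_image {ι M : Type*} [AddCommMonoid M] (S : Set (ℝ × ℝ)) (T : Finset ι)
    (g : ι → ℝ × ℝ) (hg : Set.InjOn g T) (hS : ∀ q, q ∈ S ↔ ∃ i ∈ T, g i = q)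
    (F : ℝ × ℝ → M) : ∑ᶠ q ∈ S, F q = ∑ i ∈ T, F (g i) := by
  classical
  have : S = ↑(T.image g) := by
    ext q; simp [hS]
  rw [this, finsum_mem_coe_finset, Finset.sum_image hg]

lemma partA0 {ι : Type*} (c : PlanarCurve) (I : Finset ι) (fs sn : ι → ℝ)
    (hfs : Set.InjOn fs I) (hne : ∀ i ∈ I, ∀ j ∈ I, fs i ≠ sn j)
    (hr : ∀ i ∈ I, 0 ≤ fs i ∧ fs i < sn i ∧ sn i < 1)
    (hiff : ∀ p q, 0 ≤ p → p < q → q < 1 →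
      (c.toFun p = c.toFun q ↔ ∃ i ∈ I, fs i = p ∧ sn i = q))
    (hdet : ∀ i ∈ I, 0 < det2 (deriv c.toFun (fs i)) (deriv c.toFun (sn i))) :
    c.Stable ∧ c.crossings = I.card ∧ PlanarCurve.fX c = ∑ i ∈ I,
      FreeAbelianGroup.of (PlanarCurve.arcIndex c.toFun (fs i) (sn i),
        PlanarCurve.arcIndex c.toFun (sn i) (fs i + 1)) := by
  classical
  have hno3 : ∀ x y z, 0 ≤ x → x < y → y < z → z < 1 → c.toFun x = c.toFun y →
      c.toFun y = c.toFun z → False := by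
    intro x y z hx hxy hyz hz h1 h2
    obtain ⟨i, hi, -, hi2⟩ := (hiff x y hx hxy (hyz.trans hz)).1 h1
    obtain ⟨j, hj, hj1, -⟩ := (hiff y z (hx.trans hxy.le) hyz hz).1 h2
    exact hne j hj i hi (hj1.trans hi2.symm)
  have hpair : ∀ s t, s ∈ Set.Ico (0:ℝ) 1 → t ∈ Set.Ico (0:ℝ) 1 → s < t →
      c.toFun s = c.toFun t → {u ∈ Set.Ico (0:ℝ) 1 | c.toFun u = c.toFun s} = {s, t} := by
    intro s t hs ht hst h
    ext u
    simp only [Set.mem_ofPred_eq, Set.mem_insert_iff, Set.mem_singleton_iff]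
    constructor
    · rintro ⟨hu, hus⟩
      by_contra hcon
      push Not at hcon
      rcases lt_or_gt_of_ne hcon.1 with h1 | h1
      · exact hno3 u s t hu.1 h1 hst ht.2 hus h
      rcases lt_or_gt_of_ne hcon.2 with h2 | h2
      · exact hno3 s u t hs.1 h1 h2 ht.2 hus.symm (hus.trans h)
      · exact hno3 s t u hs.1 hst h2 hu.2 h (h.symm.trans hus.symm)
    · rintro (rfl | rfl)
      · exact ⟨hs, rfl⟩
      · exact ⟨ht, h.symm⟩
  have hex : ∀ p, 2 ≤ PlanarCurve.multF c.toFun p → ∃ i ∈ I, c.toFun (fs i) = p := by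
    intro p hp
    have hp' : 1 < Set.ncard {t ∈ Set.Ico (0:ℝ) 1 | c.toFun t = p} := hp
    have hfin : Set.Finite {t ∈ Set.Ico (0:ℝ) 1 | c.toFun t = p} :=
      Set.finite_of_ncard_pos (by omega)
    obtain ⟨s, t, hs, ht, hst⟩ := (Set.one_lt_ncard_iff hfin).1 hp'
    rcases lt_or_gt_of_ne hst with h | h
    · obtain ⟨i, hi, hi1, -⟩ := (hiff s t hs.1.1 h ht.1.2).1 (hs.2.trans ht.2.symm)
      exact ⟨i, hi, by rw [hi1]; exact hs.2⟩
    · obtain ⟨i, hi, hi1, -⟩ := (hiff t s ht.1.1 h hs.1.2).1 (ht.2.trans hs.2.symm)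
      exact ⟨i, hi, by rw [hi1]; exact ht.2⟩
  have hI1 : ∀ i ∈ I, fs i ∈ Set.Ico (0:ℝ) 1 := fun i hi =>
    ⟨(hr i hi).1, (hr i hi).2.1.trans (hr i hi).2.2⟩
  have hI2 : ∀ i ∈ I, sn i ∈ Set.Ico (0:ℝ) 1 := fun i hi =>
    ⟨(hr i hi).1.trans (hr i hi).2.1.le, (hr i hi).2.2⟩
  have heq : ∀ i ∈ I, c.toFun (fs i) = c.toFun (sn i) := fun i hi =>
    (hiff _ _ (hr i hi).1 (hr i hi).2.1 (hr i hi).2.2).2 ⟨i, hi, rfl, rfl⟩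
  have hset : ∀ i ∈ I, {u ∈ Set.Ico (0:ℝ) 1 | c.toFun u = c.toFun (fs i)} = {fs i, sn i} :=
    fun i hi => hpair _ _ (hI1 i hi) (hI2 i hi) (hr i hi).2.1 (heq i hi)
  have hm2 : ∀ i ∈ I, PlanarCurve.multF c.toFun (c.toFun (fs i)) = 2 := by
    intro i hi
    unfold PlanarCurve.multF
    rw [hset i hi, Set.ncard_pair (hr i hi).2.1.ne]
  have hcs : PlanarCurve.crossingSetF c.toFun = ↑(I.image (fun i => c.toFun (fs i))) := by
    ext p
    simp only [PlanarCurve.crossingSetF, Set.mem_ofPred_eq, Finset.coe_image, Set.mem_image,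
      Finset.mem_coe]
    constructor
    · exact hex p
    · rintro ⟨i, hi, rfl⟩
      exact (hm2 i hi).ge
  refine ⟨⟨?_, ?_⟩, ?_, ?_⟩
  · rw [hcs]; exact Finset.finite_toSet _
  · intro p
    by_cases hp : 2 ≤ PlanarCurve.multF c.toFun p
    · obtain ⟨i, hi, rfl⟩ := hex p hp
      refine ⟨(hm2 i hi).le, fun _ => ?_⟩
      intro s hs t ht hst h1 h2
      have e1 : s ∈ ({fs i, sn i} : Set ℝ) := by rw [← hset i hi]; exact ⟨hs, h1⟩
      have e2 : t ∈ ({fs i, sn i} : Set ℝ) := by rw [← hset i hi]; exact ⟨ht, h2⟩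
      have hd := hdet i hi
      simp only [Set.mem_insert_iff, Set.mem_singleton_iff] at e1 e2
      rcases e1 with rfl | rfl <;> rcases e2 with rfl | rfl
      · exact absurd rfl hst
      · exact hd.ne'
      · unfold det2 at *
        intro h0
        linarith
      · exact absurd rfl hst
    · exact ⟨by omega, fun h => by omega⟩
  · unfold PlanarCurve.crossings
    rw [hcs, Set.ncard_coe_finset, Finset.card_image_of_injOn]
    intro i hi j hj hij
    simp only at hij
    rcases lt_trichotomy (fs i) (fs j) with h | h | h
    · obtain ⟨m, hm, -, hm2⟩ := (hiff _ _ (hr i hi).1 h (hI1 j hj).2).1 hij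
      exact absurd hm2.symm (hne j hj m hm)
    · exact hfs hi hj h
    · obtain ⟨m, hm, -, hm2⟩ := (hiff _ _ (hr j hj).1 h (hI1 i hi).2).1 hij.symm
      exact absurd hm2.symm (hne i hi m hm)
  · unfold PlanarCurve.fX
    rw [fsum_of_image (PlanarCurve.crossingPairsF c.toFun) I (fun i => (fs i, sn i))]
    · apply Finset.sum_congr rfl
      intro i hi
      simp only
      rw [if_pos (hdet i hi)]
    · intro i hi j hj hij
      exact hfs hi hj (Prod.ext_iff.1 hij).1
    · rintro ⟨p, q⟩
      simp only [PlanarCurve.crossingPairsF, Set.mem_ofPred_eq, Prod.mk.injEq]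
      constructor
      · rintro ⟨hp, hq, hpq, h⟩
        exact (hiff p q hp.1 hpq hq.2).1 h
      · rintro ⟨i, hi, rfl, rfl⟩
        exact ⟨hI1 i hi, hI2 i hi, (hr i hi).2.1, heq i hi⟩

lemma partA (c : PlanarCurve) (k l : ℕ) (s a b : ℕ → ℝ)
    (hs0 : ∀ i < k, 0 < s i) (hsh : ∀ i < k, s i < 1 / 2)
    (hsm : ∀ i j, i < j → j < k → s i < s j)
    (hsa : ∀ i < k, ∀ j < l, s i < a j) (ha0 : ∀ j < l, 0 < a j)
    (hab : ∀ j < l, a j < b j) (hb1 : ∀ j < l, b j < 1)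
    (hba : ∀ i j, i < j → j < l → b i < a j)
    (hbs : ∀ i < k, ∀ j < l, b j < 1 - s i)
    (hiff : ∀ p q, 0 ≤ p → p < q → q < 1 →
      (c.toFun p = c.toFun q ↔
        (∃ i < k, s i = p ∧ 1 - s i = q) ∨ (∃ j < l, a j = p ∧ b j = q)))
    (hdet1 : ∀ i < k, 0 < det2 (deriv c.toFun (s i)) (deriv c.toFun (1 - s i)))
    (hdet2 : ∀ j < l, 0 < det2 (deriv c.toFun (a j)) (deriv c.toFun (b j))) :
    c.Stable ∧ c.crossings = k + l ∧ PlanarCurve.fX c =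
      (∑ i ∈ Finset.range k, FreeAbelianGroup.of ((l + i : ℤ), ((i : ℤ) + 1 - k))) +
        (l : ℤ) • FreeAbelianGroup.of ((0 : ℤ), (l : ℤ) - 1 - k) := by
  classical
  have hper : ∀ t, c.toFun (t + 1) = c.toFun t := c.periodic
  have hdper : ∀ t, deriv c.toFun (t + 1) = deriv c.toFun t := by
    intro t
    rw [← deriv_comp_add_const]
    congr 1
    ext u
    exact hper u
  have hmono : ∀ i j, i < k → j < k → s i < s j → i < j := by
    intro i j hi hj h
    by_contra hc
    rcases Nat.lt_or_ge j i with h' | h'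
    · linarith [hsm j i h' hi]
    · have : i = j := by omega
      subst this; exact lt_irrefl _ h
  have hamono : ∀ i j, i < j → j < l → a i < a j := fun i j h1 h2 =>
    (hab i (h1.trans h2)).trans (hba i j h1 h2)
  have hcross1 : ∀ i < k, c.toFun (s i) = c.toFun (1 - s i) := fun i hi =>
    (hiff _ _ (hs0 i hi).le (by linarith [hsh i hi]) (by linarith [hs0 i hi])).2
      (Or.inl ⟨i, hi, rfl, rfl⟩)
  have hcross2 : ∀ j < l, c.toFun (a j) = c.toFun (b j) := fun i hi =>
    (hiff _ _ (ha0 i hi).le (hab i hi) (hb1 i hi)).2 (Or.inr ⟨i, hi, rfl, rfl⟩)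
  -- index of arcs
  have sgn1 : ∀ i < k, PlanarCurve.crossSign c.toFun (s i) (1 - s i) = 1 := fun i hi =>
    if_pos (hdet1 i hi)
  have sgn1' : ∀ i < k, PlanarCurve.crossSign c.toFun (1 - s i) (s i + 1) = -1 := by
    intro i hi
    apply if_neg
    rw [hdper]
    have := hdet1 i hi
    unfold det2 at *
    linarith
  have sgn2 : ∀ i < l, PlanarCurve.crossSign c.toFun (a i) (b i) = 1 := fun i hi =>
    if_pos (hdet2 i hi)
  have sgn2' : ∀ i < l, PlanarCurve.crossSign c.toFun (a i + 1) (b i + 1) = 1 := by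
    intro i hi
    apply if_pos
    rw [hdper, hdper]
    exact hdet2 i hi
  have ai1 : ∀ i < k, PlanarCurve.arcIndex c.toFun (s i) (1 - s i) = l + ((k : ℤ) - 1 - i) := by
    intro i hi
    unfold PlanarCurve.arcIndex
    rw [fsum_of_image _ ((Finset.Ico (i+1) k).disjSum (Finset.range l))
      (Sum.elim (fun j => (s j, 1 - s j)) (fun j => (a j, b j)))]
    · rw [Finset.sum_disjSum]
      simp only [Sum.elim_inl, Sum.elim_inr]
      rw [Finset.sum_congr rfl (fun j hj => sgn1 j (Finset.mem_Ico.1 hj).2),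
        Finset.sum_congr rfl (fun j hj => sgn2 j (Finset.mem_range.1 hj))]
      simp
      rw [Nat.cast_sub (by omega)]
      push_cast; ring
    · rintro (x | x) hx (y | y) hy hxy <;>
        simp only [Finset.mem_coe, Finset.inl_mem_disjSum, Finset.inr_mem_disjSum,
          Finset.mem_Ico, Finset.mem_range, Sum.elim_inl, Sum.elim_inr, Prod.mk.injEq] at *
      · congr 1
        rcases lt_trichotomy x y with h | h | h
        · linarith [hsm x y h hy.2]
        · exact h
        · linarith [hsm y x h hx.2]
      · linarith [hsa x hx.2 y hy]
      · linarith [hsa y hy.2 x hx]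
      · congr 1
        rcases lt_trichotomy x y with h | h | h
        · linarith [hamono x y h hy]
        · exact h
        · linarith [hamono y x h hx]
    · rintro ⟨p, q⟩
      simp only [Set.mem_ofPred_eq, Set.mem_Ioo]
      have h0 := hs0 i hi
      constructor
      · rintro ⟨hp, hq, hpq, h⟩
        rcases (hiff p q (by linarith) hpq (by linarith)).1 h with ⟨j, hj, rfl, rfl⟩ | ⟨j, hj, rfl, rfl⟩
        · refine ⟨Sum.inl j, ?_, rfl⟩
          have := hmono i j hi hj hp.1
          simp; omega
        · exact ⟨Sum.inr j, by simpa using hj, rfl⟩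
      · rintro ⟨(j | j), hj, h⟩ <;>
          simp only [Finset.inl_mem_disjSum, Finset.inr_mem_disjSum,
          Finset.mem_Ico, Finset.mem_range, Sum.elim_inl, Sum.elim_inr, Prod.mk.injEq] at * <;>
          obtain ⟨rfl, rfl⟩ := h
        · have h1 := hsm i j (by omega) hj.2
          have h2 := hsh j hj.2
          exact ⟨⟨h1, by linarith⟩, ⟨by linarith, by linarith⟩, by linarith, hcross1 j hj.2⟩
        · have h1 := hsa i hi j hj
          have h2 := hbs i hi j hj
          have h3 := hab j hj
          exact ⟨⟨h1, by linarith⟩, ⟨by linarith, by linarith⟩, by linarith, hcross2 j hj⟩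
  have ai1' : ∀ i < k, PlanarCurve.arcIndex c.toFun (1 - s i) (s i + 1) = -(i : ℤ) := by
    intro i hi
    unfold PlanarCurve.arcIndex
    rw [fsum_of_image _ (Finset.range i) (fun j => (1 - s j, s j + 1))]
    · rw [Finset.sum_congr rfl (fun j hj => sgn1' j ((Finset.mem_range.1 hj).trans hi))]
      simp
    · intro x hx y hy hxy
      simp only [Finset.mem_coe, Finset.mem_range, Prod.mk.injEq] at *
      rcases lt_trichotomy x y with h | h | h
      · linarith [hsm x y h (by omega)]
      · exact h
      · linarith [hsm y x h (by omega)]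
    · rintro ⟨p, q⟩
      simp only [Set.mem_ofPred_eq, Set.mem_Ioo]
      have h0 := hs0 i hi
      have h0' := hsh i hi
      constructor
      · rintro ⟨hp, hq, hpq, h⟩
        rcases lt_or_ge q 1 with hq1 | hq1
        · rcases (hiff p q (by linarith) hpq hq1).1 h with ⟨j, hj, rfl, rfl⟩ | ⟨j, hj, rfl, rfl⟩
          · linarith [hsh j hj]
          · linarith [hbs i hi j hj, hab j hj]
        · have hq' : c.toFun q = c.toFun (q - 1) := by rw [← hper (q - 1)]; ring_nf
          rcases lt_or_ge p 1 with hp1 | hp1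
          · rcases (hiff (q-1) p (by linarith) (by linarith) hp1).1 (by rw [h, hq'])
              with ⟨j, hj, h1, rfl⟩ | ⟨j, hj, h1, rfl⟩
            · refine ⟨j, ?_, ?_⟩
              · exact Finset.mem_range.2 (hmono j i hj hi (by linarith))
              · simp; linarith
            · linarith [hbs i hi j hj, hab j hj]
          · have hp' : c.toFun p = c.toFun (p - 1) := by rw [← hper (p - 1)]; ring_nf
            rcases (hiff (p-1) (q-1) (by linarith) (by linarith) (by linarith)).1
              (by rw [← hp', ← hq', h]) with ⟨j, hj, h1, h2⟩ | ⟨j, hj, h1, h2⟩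
            · linarith [hsh j hj]
            · linarith [hsa i hi j hj]
      · rintro ⟨j, hj, h⟩
        simp only [Finset.mem_range, Prod.mk.injEq] at *
        obtain ⟨rfl, rfl⟩ := h
        have h1 := hsm j i hj hi
        have h2 := hs0 j (hj.trans hi)
        refine ⟨⟨by linarith, by linarith⟩, ⟨by linarith, by linarith⟩, by linarith, ?_⟩
        rw [hper, hcross1 j (hj.trans hi)]
  have ai2 : ∀ j < l, PlanarCurve.arcIndex c.toFun (a j) (b j) = 0 := by
    intro j hj
    unfold PlanarCurve.arcIndex
    rw [fsum_of_image _ (∅ : Finset ℕ) (fun _ => (0, 0))]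
    · simp
    · simp
    · rintro ⟨p, q⟩
      simp only [Set.mem_ofPred_eq, Set.mem_Ioo, Finset.notMem_empty, false_and, exists_false,
        iff_false]
      rintro ⟨hp, hq, hpq, h⟩
      have h0 := ha0 j hj
      have h1 := hb1 j hj
      rcases (hiff p q (by linarith) hpq (by linarith)).1 h with ⟨i, hi, rfl, rfl⟩ | ⟨i, hi, rfl, rfl⟩
      · linarith [hsa i hi j hj]
      · rcases lt_trichotomy i j with h | rfl | h
        · linarith [hamono i j h hj]
        · linarith
        · linarith [hba j i h hi]
  have ai2' : ∀ j < l, PlanarCurve.arcIndex c.toFun (b j) (a j + 1) = (l : ℤ) - 1 - k := by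
    intro j hj
    unfold PlanarCurve.arcIndex
    have hj0 := ha0 j hj
    have hj1 := hb1 j hj
    have hjab := hab j hj
    rw [fsum_of_image _ ((Finset.range k).disjSum ((Finset.range l).erase j))
      (Sum.elim (fun i => (1 - s i, s i + 1))
        (fun m => if m < j then (a m + 1, b m + 1) else (a m, b m)))]
    · rw [Finset.sum_disjSum]
      simp only [Sum.elim_inl, Sum.elim_inr]
      rw [Finset.sum_congr rfl (fun i hi => sgn1' i (Finset.mem_range.1 hi))]
      have : ∀ m ∈ (Finset.range l).erase j, PlanarCurve.crossSign c.toFun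
          (if m < j then (a m + 1, b m + 1) else (a m, b m)).1
          (if m < j then (a m + 1, b m + 1) else (a m, b m)).2 = 1 := by
        intro m hm
        have hm' : m < l := Finset.mem_range.1 (Finset.mem_of_mem_erase hm)
        split_ifs
        · exact sgn2' m hm'
        · exact sgn2 m hm'
      rw [Finset.sum_congr rfl this]
      simp [Finset.card_erase_of_mem (Finset.mem_range.2 hj)]
      rw [Nat.cast_sub (by omega)]
      push_cast; ring
    · have key : ∀ x < k, ∀ y < l, ((1 - s x, s x + 1) : ℝ × ℝ) ≠
          (if y < j then (a y + 1, b y + 1) else (a y, b y)) := by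
        intro x hx y hy h
        split_ifs at h <;> simp only [Prod.mk.injEq] at h
        · linarith [hsa x hx y hy, hab y hy]
        · linarith [hb1 y hy, hs0 x hx]
      rintro (x | x) hx (y | y) hy hxy <;>
        simp only [Finset.mem_coe, Finset.inl_mem_disjSum, Finset.inr_mem_disjSum,
          Finset.mem_range, Finset.mem_erase, Sum.elim_inl, Sum.elim_inr] at *
      · congr 1
        simp only [Prod.mk.injEq] at hxy
        rcases lt_trichotomy x y with h | h | h
        · linarith [hsm x y h hy]
        · exact h
        · linarith [hsm y x h hx]
      · exact absurd hxy (key x hx y hy.2)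
      · exact absurd hxy.symm (key y hy x hx.2)
      · congr 1
        have e1 := ha0 x hx.2
        have e2 := ha0 y hy.2
        have e3 := hb1 x hx.2
        have e4 := hb1 y hy.2
        have e5 : a x = a y := by
          split_ifs at hxy <;> simp only [Prod.mk.injEq] at hxy <;> linarith [hab x hx.2, hab y hy.2]
        rcases lt_trichotomy x y with h | h | h
        · linarith [hamono x y h hy.2]
        · exact h
        · linarith [hamono y x h hx.2]
    · rintro ⟨p, q⟩
      simp only [Set.mem_ofPred_eq, Set.mem_Ioo]
      constructor
      · rintro ⟨hp, hq, hpq, h⟩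
        rcases lt_or_ge q 1 with hq1 | hq1
        · rcases (hiff p q (by linarith) hpq hq1).1 h with ⟨i, hi, rfl, rfl⟩ | ⟨i, hi, rfl, rfl⟩
          · linarith [hsa i hi j hj]
          · have hij : j < i := by
              by_contra hc
              rcases Nat.lt_or_ge i j with h' | h'
              · linarith [hamono i j h' hj]
              · have : i = j := by omega
                subst this; linarith
            refine ⟨Sum.inr i, ?_, ?_⟩
            · simp; omega
            · simp; omega
        · have hq' : c.toFun q = c.toFun (q - 1) := by rw [← hper (q - 1)]; ring_nf
          rcases lt_or_ge p 1 with hp1 | hp1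
          · rcases (hiff (q-1) p (by linarith) (by linarith) hp1).1 (by rw [h, hq'])
              with ⟨i, hi, h1, rfl⟩ | ⟨i, hi, h1, rfl⟩
            · refine ⟨Sum.inl i, by simpa using hi, ?_⟩
              simp; linarith
            · exfalso
              rcases lt_trichotomy i j with h' | rfl | h'
              · linarith [hba i j h' hj]
              · linarith
              · linarith [hamono j i h' hi]
          · have hp' : c.toFun p = c.toFun (p - 1) := by rw [← hper (p - 1)]; ring_nf
            rcases (hiff (p-1) (q-1) (by linarith) (by linarith) (by linarith)).1
              (by rw [← hp', ← hq', h]) with ⟨i, hi, h1, h2⟩ | ⟨i, hi, h1, h2⟩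
            · linarith [hbs i hi j hj]
            · have hij : i < j := by
                by_contra hc
                rcases Nat.lt_or_ge j i with h' | h'
                · linarith [hamono j i h' hi]
                · have : i = j := by omega
                  subst this; linarith
              refine ⟨Sum.inr i, ?_, ?_⟩
              · simp; omega
              · simp only [Sum.elim_inr, if_pos hij, Prod.mk.injEq]
                constructor <;> linarith
      · rintro ⟨(i | i), hi, h⟩ <;>
          simp only [Finset.inl_mem_disjSum, Finset.inr_mem_disjSum,
          Finset.mem_erase, Finset.mem_range, Sum.elim_inl, Sum.elim_inr] at *
        · simp only [Prod.mk.injEq] at h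
          obtain ⟨rfl, rfl⟩ := h
          have h1 := hsa i hi j hj
          have h2 := hbs i hi j hj
          have h3 := hs0 i hi
          refine ⟨⟨by linarith, by linarith⟩, ⟨by linarith, by linarith⟩, by linarith, ?_⟩
          rw [hper, hcross1 i hi]
        · have e1 := ha0 i hi.2
          have e3 := hb1 i hi.2
          have e4 := hab i hi.2
          split_ifs at h with hc <;> simp only [Prod.mk.injEq] at h <;> obtain ⟨rfl, rfl⟩ := h
          · have := hba i j hc hj
            refine ⟨⟨by linarith, by linarith⟩, ⟨by linarith, by linarith⟩, by linarith, ?_⟩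
            rw [hper, hper, hcross2 i hi.2]
          · have := hba j i (by omega) hi.2
            exact ⟨⟨by linarith, by linarith⟩, ⟨by linarith, by linarith⟩, by linarith, hcross2 i hi.2⟩
  -- conclude
  obtain ⟨h1, h2, h3⟩ := partA0 c ((Finset.range k).disjSum (Finset.range l))
    (Sum.elim s a) (Sum.elim (fun i => 1 - s i) b)
    (by
      rintro (x | x) hx (y | y) hy hxy <;>
        simp only [Finset.mem_coe, Finset.inl_mem_disjSum, Finset.inr_mem_disjSum,
          Finset.mem_range, Sum.elim_inl, Sum.elim_inr] at *
      · congr 1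
        rcases lt_trichotomy x y with h | h | h
        · linarith [hsm x y h hy]
        · exact h
        · linarith [hsm y x h hx]
      · linarith [hsa x hx y hy]
      · linarith [hsa y hy x hx]
      · congr 1
        rcases lt_trichotomy x y with h | h | h
        · linarith [hamono x y h hy]
        · exact h
        · linarith [hamono y x h hx])
    (by
      rintro (x | x) hx (y | y) hy hxy <;>
        simp only [Finset.inl_mem_disjSum, Finset.inr_mem_disjSum,
          Finset.mem_range, Sum.elim_inl, Sum.elim_inr] at *
      · linarith [hsh x hx, hsh y hy]
      · linarith [hsa x hx y hy, hab y hy]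
      · linarith [hbs y hy x hx, hab x hx]
      · rcases lt_trichotomy x y with h | rfl | h
        · linarith [hamono x y h hy, hab y hy]
        · linarith [hab x hx]
        · linarith [hba y x h hx])
    (by
      rintro (x | x) hx <;>
        simp only [Finset.inl_mem_disjSum, Finset.inr_mem_disjSum,
          Finset.mem_range, Sum.elim_inl, Sum.elim_inr] at *
      · have := hs0 x hx
        have := hsh x hx
        exact ⟨by linarith, by linarith, by linarith⟩
      · exact ⟨(ha0 x hx).le, hab x hx, hb1 x hx⟩)
    (by
      intro p q hp hpq hq
      rw [hiff p q hp hpq hq]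
      simp [Finset.mem_disjSum])
    (by
      rintro (x | x) hx <;>
        simp only [Finset.inl_mem_disjSum, Finset.inr_mem_disjSum,
          Finset.mem_range, Sum.elim_inl, Sum.elim_inr] at *
      · exact hdet1 x hx
      · exact hdet2 x hx)
  refine ⟨h1, by simpa using h2, ?_⟩
  rw [h3, Finset.sum_disjSum]
  simp only [Sum.elim_inl, Sum.elim_inr]
  congr 1
  · rw [← Finset.sum_range_reflect]
    apply Finset.sum_congr rfl
    intro i hi
    have hi := Finset.mem_range.1 hi
    rw [ai1 _ (by omega), ai1' _ (by omega)]
    congr 2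
    · have : ((k - 1 - i : ℕ) : ℤ) = k - 1 - i := by omega
      rw [this]; ring
    · have : ((k - 1 - i : ℕ) : ℤ) = k - 1 - i := by omega
      rw [this]; ring
  · rw [Finset.sum_congr rfl (g := fun _ => FreeAbelianGroup.of ((0 : ℤ), (l : ℤ) - 1 - k))]
    · simp
    · intro j hj
      have hj := Finset.mem_range.1 hj
      rw [ai2 j hj, ai2' j hj]

lemma whitney_of_Icc (c : PlanarCurve) (ω : ℤ) (θ : ℝ → ℝ) (hθ : ContinuousOn θ (Set.Icc 0 1))
    (hd : ∀ t ∈ Set.Icc (0:ℝ) 1, deriv c.toFun t =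
      (‖deriv c.toFun t‖ : ℂ) * Complex.exp ((θ t : ℂ) * Complex.I))
    (h1 : θ 1 - θ 0 = 2 * Real.pi * (ω : ℝ)) : c.HasWhitney ω := by
  have hper : ∀ t, c.toFun (t + 1) = c.toFun t := c.periodic
  have hdper : Function.Periodic (deriv c.toFun) 1 := by
    intro t
    rw [← deriv_comp_add_const]
    congr 1
    ext u
    exact hper u
  have hcf : Continuous ((fun t => θ t - 2 * Real.pi * ω * t) ∘ Int.fract) := by
    apply ContinuousOn.comp_fract''
    · fun_prop
    · simp; linarith
  refine ⟨fun t => ((fun t => θ t - 2 * Real.pi * ω * t) ∘ Int.fract) t + 2 * Real.pi * ω * t,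
    by fun_prop, ?_, ?_⟩
  · intro t
    have h2 : deriv c.toFun t = deriv c.toFun (Int.fract t) := by
      have h3 := hdper.sub_int_mul_eq (x := t) ⌊t⌋
      rw [mul_one] at h3
      exact h3.symm
    rw [h2]
    conv_lhs => rw [hd (Int.fract t) ⟨Int.fract_nonneg t, (Int.fract_lt_one t).le⟩]
    congr 1
    rw [Complex.exp_eq_exp_iff_exists_int]
    refine ⟨-(⌊t⌋ * ω), ?_⟩
    have : (t : ℂ) = (Int.fract t : ℝ) + (⌊t⌋ : ℂ) := by
      rw [← Complex.ofReal_intCast, ← Complex.ofReal_add, Int.fract_add_floor]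
    simp only [Function.comp]
    push_cast
    rw [this]
    ring
  · simp

/-! The bump -/
def Gam (c : ℝ) : ℝ := Real.exp 1 * expNegInvGlue c

def Gam' (c : ℝ) : ℝ := deriv Gam c

lemma Gam_smooth : ContDiff ℝ (⊤ : ℕ∞) Gam := by
  unfold Gam
  exact contDiff_const.mul expNegInvGlue.contDiff

lemma Gam_nonneg (c : ℝ) : 0 ≤ Gam c := mul_nonneg (Real.exp_pos _).le (expNegInvGlue.nonneg c)

lemma Gam_zero {c : ℝ} (h : c ≤ 0) : Gam c = 0 := by
  simp [Gam, expNegInvGlue.zero_of_nonpos h]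

lemma Gam_pos {c : ℝ} (h : 0 < c) : 0 < Gam c :=
  mul_pos (Real.exp_pos _) (expNegInvGlue.pos_of_pos h)

lemma Gam_pos_iff {c : ℝ} : 0 < Gam c ↔ 0 < c := by
  constructor
  · intro h
    by_contra hc
    rw [Gam_zero (not_lt.1 hc)] at h
    exact lt_irrefl _ h
  · exact Gam_pos

lemma Gam_one : Gam 1 = 1 := by
  simp [Gam, expNegInvGlue, ← Real.exp_add]

lemma Gam_le_one {c : ℝ} (h : c ≤ 1) : Gam c ≤ 1 := by
  rw [← Gam_one]
  exact mul_le_mul_of_nonneg_left (expNegInvGlue.monotone h) (Real.exp_pos _).le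

lemma Gam_lt {c d : ℝ} (hc : 0 < c) (h : c < d) : Gam c < Gam d := by
  have hd := hc.trans h
  unfold Gam expNegInvGlue
  rw [if_neg (not_le.2 hc), if_neg (not_le.2 hd)]
  apply mul_lt_mul_of_pos_left _ (Real.exp_pos _)
  apply Real.exp_lt_exp.2
  apply neg_lt_neg
  exact (inv_lt_inv₀ hd hc).2 h

lemma Gam_inj {c d : ℝ} (hc : 0 < Gam c) (h : Gam c = Gam d) : c = d := by
  have h1 := Gam_pos_iff.1 hc
  have h2 := Gam_pos_iff.1 (h ▸ hc)
  rcases lt_trichotomy c d with h' | h' | h'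
  · exact absurd h (Gam_lt h1 h').ne
  · exact h'
  · exact absurd h (Gam_lt h2 h').ne'

lemma Gam_deriv (c : ℝ) : HasDerivAt Gam (Gam' c) c :=
  ((Gam_smooth.differentiable (by simp)) c).hasDerivAt

lemma Gam'_pos {c : ℝ} (hc : 0 < c) : 0 < Gam' c := by
  have h1 : HasDerivAt (fun x : ℝ => Real.exp 1 * Real.exp (-x⁻¹))
      (Real.exp 1 * (Real.exp (-c⁻¹) * (-(-(c^2)⁻¹)))) c :=
    ((hasDerivAt_inv hc.ne').neg.exp).const_mul _
  have h2 : Gam =ᶠ[nhds c] (fun x : ℝ => Real.exp 1 * Real.exp (-x⁻¹)) := by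
    filter_upwards [lt_mem_nhds hc] with x hx
    simp [Gam, expNegInvGlue, not_le.2 hx]
  have h3 := h1.congr_of_eventuallyEq h2
  rw [(Gam_deriv c).unique h3]
  rw [neg_neg]
  positivity

lemma Gam'_zero {c : ℝ} (hc : c ≤ 0) : Gam' c = 0 := by
  apply IsLocalMin.deriv_eq_zero
  filter_upwards with x
  rw [Gam_zero hc]
  exact Gam_nonneg x

lemma Gam'_nonneg (c : ℝ) : 0 ≤ Gam' c := by
  rcases le_or_gt c 0 with h | h
  · rw [Gam'_zero h]
  · exact (Gam'_pos h).le

/-! The angle y0 -/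
lemma exists_y0 : ∃ y : ℝ, 0 < y ∧ y < Real.pi / 2 ∧
    y = 2 * Real.sin y * Gam (Real.cos y) := by
  have hc : Continuous (fun y => 2 * Real.sinc y * Gam (Real.cos y)) := by
    have := Gam_smooth.continuous
    have := Real.continuous_sinc
    fun_prop
  have hp := Real.pi_pos
  have := intermediate_value_Ioo' (a := 0) (b := Real.pi / 2) (by positivity) hc.continuousOn
  have h1 : (1 : ℝ) ∈ Set.Ioo (2 * Real.sinc (Real.pi/2) * Gam (Real.cos (Real.pi/2)))
      (2 * Real.sinc 0 * Gam (Real.cos 0)) := by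
    simp [Gam_one, Gam_zero]
  obtain ⟨y, hy, hy1⟩ := this h1
  refine ⟨y, hy.1, hy.2, ?_⟩
  simp only at hy1
  rw [Real.sinc_of_ne_zero hy.1.ne'] at hy1
  have := hy.1.ne'
  field_simp at hy1
  linarith

lemma y0_unique {y z : ℝ} (hy : 0 < y) (hyp : y < Real.pi / 2) (hz : 0 < z)
    (hzp : z < Real.pi / 2) (ey : y = 2 * Real.sin y * Gam (Real.cos y))
    (ez : z = 2 * Real.sin z * Gam (Real.cos z)) : y = z := by
  wlog h : y < z generalizing y z
  · rcases lt_trichotomy y z with h' | h' | h'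
    · exact this hy hyp hz hzp ey ez h'
    · exact h'
    · exact (this hz hzp hy hyp ez ey h').symm
  exfalso
  have hcz : 0 < Real.cos z := Real.cos_pos_of_mem_Ioo ⟨by linarith, hzp⟩
  have hcc : Real.cos z < Real.cos y :=
    Real.cos_lt_cos_of_nonneg_of_le_pi hy.le (by linarith [Real.pi_pos]) h
  have hG := Gam_lt hcz hcc
  have hGz := Gam_pos hcz
  have hsy : 0 < Real.sin y := Real.sin_pos_of_pos_of_lt_pi hy (by linarith [Real.pi_pos])
  have hconc := strictConcaveOn_sin_Icc.concaveOn.2 (show (0:ℝ) ∈ Set.Icc 0 Real.pi from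
    ⟨le_rfl, Real.pi_pos.le⟩) (show z ∈ Set.Icc 0 Real.pi from
      ⟨hz.le, by linarith [Real.pi_pos]⟩) (show 0 ≤ 1 - y / z from
    (by rw [sub_nonneg, div_le_one hz]; exact h.le)) (show 0 ≤ y / z by positivity) (by ring)
  simp only [smul_eq_mul, Real.sin_zero, mul_zero, zero_add] at hconc
  rw [div_mul_cancel₀ _ hz.ne', div_mul_eq_mul_div, div_le_iff₀ hz] at hconc
  -- y sin z ≤ sin y z
  have h1 : Real.sin y * Gam (Real.cos z) * z < Real.sin y * Gam (Real.cos y) * z := by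
    apply mul_lt_mul_of_pos_right _ hz
    exact mul_lt_mul_of_pos_left hG hsy
  have h2 : y * Real.sin z * Gam (Real.cos z) ≤ Real.sin y * z * Gam (Real.cos z) :=
    mul_le_mul_of_nonneg_right hconc hGz.le
  have h3 : y * z = y * (2 * Real.sin z * Gam (Real.cos z)) := by rw [← ez]
  have h4 : y * z = (2 * Real.sin y * Gam (Real.cos y)) * z := by rw [← ey]
  nlinarith

/-- derivative positivity at y0 -/
lemma y0_deriv {y : ℝ} (hy : 0 < y) (hyp : y < Real.pi / 2)
    (ey : y = 2 * Real.sin y * Gam (Real.cos y)) :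
    0 < 1 - 2 * (Real.cos y * Gam (Real.cos y) - Real.sin y * (Gam' (Real.cos y) * Real.sin y)) := by
  have hc : 0 < Real.cos y := Real.cos_pos_of_mem_Ioo ⟨by linarith, hyp⟩
  have hs : 0 < Real.sin y := Real.sin_pos_of_pos_of_lt_pi hy (by linarith)
  have ht := Real.lt_tan hy hyp
  rw [Real.tan_eq_sin_div_cos, lt_div_iff₀ hc] at ht
  have hG := Gam_pos hc
  have hG' := Gam'_pos hc
  have h1 : y * (2 * Real.cos y * Gam (Real.cos y)) < y * 1 := by
    have : y * Real.cos y * (2 * Gam (Real.cos y)) < Real.sin y * (2 * Gam (Real.cos y)) :=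
      mul_lt_mul_of_pos_right ht (by positivity)
    nlinarith
  have h2 := lt_of_mul_lt_mul_left h1 hy.le
  have : 0 < Real.sin y * (Gam' (Real.cos y) * Real.sin y) := by positivity
  linarith

def hh (l : ℕ) : ℝ := Real.pi / (2 * (l + 1))

def LL (l : ℕ) : ℝ := l + 1

lemma LL_pos (l : ℕ) : 0 < LL l := by unfold LL; positivity

lemma LLhh (l : ℕ) : LL l * hh l = Real.pi / 2 := by
  unfold LL hh
  have : (l : ℝ) + 1 ≠ 0 := by positivity
  field_simp

lemma hh_pos (l : ℕ) : 0 < hh l := by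
  unfold hh
  have := Real.pi_pos
  positivity

lemma LL_two {l : ℕ} (hl : 1 ≤ l) : 2 ≤ LL l := by
  have : (1 : ℝ) ≤ l := by exact_mod_cast hl
  unfold LL; linarith

lemma hh_le {l : ℕ} (hl : 1 ≤ l) : 4 * hh l ≤ Real.pi := by
  have := LL_two hl
  have h1 := LLhh l
  have := hh_pos l
  nlinarith

def pD (l : ℕ) (x : ℝ) : ℝ := expNegInvGlue (Real.cos x - Real.cos (hh l))

lemma pD_smooth (l : ℕ) : ContDiff ℝ (⊤ : ℕ∞) (pD l) :=
  expNegInvGlue.contDiff.comp (Real.contDiff_cos.sub contDiff_const)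

lemma pD_cont (l : ℕ) : Continuous (pD l) := (pD_smooth l).continuous

lemma pD_per (l : ℕ) : Function.Periodic (pD l) (2 * Real.pi) := by
  intro x; simp [pD]

lemma pD_even (l : ℕ) (x : ℝ) : pD l (-x) = pD l x := by simp [pD]

lemma cos_le_mid {a x : ℝ} (ha : 0 ≤ a) (hap : a ≤ Real.pi) (h1 : a ≤ x)
    (h2 : x ≤ 2 * Real.pi - a) : Real.cos x ≤ Real.cos a := by
  rcases le_total x Real.pi with h | h
  · exact Real.cos_le_cos_of_nonneg_of_le_pi ha h h1
  · rw [← Real.cos_two_pi_sub x]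
    exact Real.cos_le_cos_of_nonneg_of_le_pi ha (by linarith) (by linarith)

def psiT (l : ℕ) : ℝ := ∫ u in (0:ℝ)..(2 * Real.pi), pD l u

def psi (l : ℕ) (x : ℝ) : ℝ := (∫ u in (0:ℝ)..x, pD l u) / psiT l

lemma psiT_pos {l : ℕ} (hl : 1 ≤ l) : 0 < psiT l := by
  unfold psiT
  apply intervalIntegral.integral_pos (by have := Real.pi_pos; linarith) (pD_cont l).continuousOn
  · intro x _; exact expNegInvGlue.nonneg _
  · refine ⟨0, ⟨le_rfl, by have := Real.pi_pos; linarith⟩, ?_⟩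
    apply expNegInvGlue.pos_of_pos
    rw [sub_pos]
    apply Real.cos_lt_cos_of_nonneg_of_le_pi le_rfl _ (hh_pos l)
    linarith [hh_le hl, hh_pos l]

lemma psi_deriv (l : ℕ) (x : ℝ) : HasDerivAt (psi l) (pD l x / psiT l) x := by
  unfold psi
  apply HasDerivAt.div_const
  exact intervalIntegral.integral_hasDerivAt_right ((pD_cont l).intervalIntegrable _ _)
    (pD_cont l).stronglyMeasurable.stronglyMeasurableAtFilter (pD_cont l).continuousAt

lemma psi_smooth (l : ℕ) : ContDiff ℝ (⊤ : ℕ∞) (psi l) := by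
  rw [contDiff_infty_iff_deriv]
  refine ⟨fun x => (psi_deriv l x).differentiableAt, ?_⟩
  have : deriv (psi l) = fun x => pD l x / psiT l := funext fun x => (psi_deriv l x).deriv
  rw [this]
  exact (pD_smooth l).div_const _

lemma psi_per {l : ℕ} (hl : 1 ≤ l) (x : ℝ) : psi l (x + 2 * Real.pi) = psi l x + 1 := by
  have h := (psiT_pos hl).ne'
  unfold psi
  rw [← intervalIntegral.integral_add_adjacent_intervals (b := x)
    ((pD_cont l).intervalIntegrable _ _) ((pD_cont l).intervalIntegrable _ _),
    (pD_per l).intervalIntegral_add_eq x 0, zero_add, add_div]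
  congr 1
  exact div_self h

lemma psi_odd (l : ℕ) (x : ℝ) : psi l (-x) = - psi l x := by
  unfold psi
  rw [← neg_div]
  congr 1
  have := intervalIntegral.integral_comp_neg (a := 0) (b := x) (f := pD l)
  simp only [pD_even, neg_zero] at this
  rw [this, intervalIntegral.integral_symm]

lemma psi_zero (l : ℕ) : psi l 0 = 0 := by simp [psi]

lemma psi_half {l : ℕ} (hl : 1 ≤ l) {x : ℝ} (h1 : hh l ≤ x) (h2 : x ≤ 2 * Real.pi - hh l) :
    psi l x = 1 / 2 := by
  have hh0 := hh_pos l
  have hh4 := hh_le hl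
  have key : ∀ y, hh l ≤ y → y ≤ 2 * Real.pi - hh l → psi l y = psi l (hh l) := by
    intro y hy1 hy2
    unfold psi
    congr 1
    rw [← intervalIntegral.integral_add_adjacent_intervals (b := hh l)
      ((pD_cont l).intervalIntegrable _ _) ((pD_cont l).intervalIntegrable _ _)]
    rw [add_eq_left]
    apply intervalIntegral.integral_zero_ae
    filter_upwards with u hu
    rw [Set.uIoc_of_le hy1] at hu
    apply expNegInvGlue.zero_of_nonpos
    rw [sub_nonpos]
    exact cos_le_mid hh0.le (by linarith) hu.1.le (by linarith [hu.2])
  have e1 := key (2 * Real.pi - hh l) (by linarith) le_rfl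
  have e2 := psi_per hl (-hh l)
  rw [psi_odd] at e2
  rw [show -hh l + 2 * Real.pi = 2 * Real.pi - hh l by ring] at e2
  rw [key x h1 h2]
  linarith

lemma psi'_nonneg {l : ℕ} (hl : 1 ≤ l) (x : ℝ) : 0 ≤ pD l x / psiT l :=
  div_nonneg (expNegInvGlue.nonneg _) (psiT_pos hl).le

lemma psi_mono {l : ℕ} (hl : 1 ≤ l) : Monotone (psi l) :=
  monotone_of_deriv_nonneg (fun x => (psi_deriv l x).differentiableAt)
    (fun x => by rw [(psi_deriv l x).deriv]; exact psi'_nonneg hl x)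

/-! beta -/
def beta (l : ℕ) (x : ℝ) : ℝ :=
  Real.smoothTransition ((Real.cos x - Real.cos (3 * hh l)) /
    (Real.cos (hh l) - Real.cos (3 * hh l)))

lemma beta_smooth (l : ℕ) : ContDiff ℝ (⊤ : ℕ∞) (beta l) :=
  Real.smoothTransition.contDiff.comp ((Real.contDiff_cos.sub contDiff_const).div_const _)

lemma beta_den {l : ℕ} (hl : 1 ≤ l) : 0 < Real.cos (hh l) - Real.cos (3 * hh l) := by
  have hh0 := hh_pos l
  have hh4 := hh_le hl
  rw [sub_pos]
  exact Real.cos_lt_cos_of_nonneg_of_le_pi hh0.le (by linarith) (by linarith)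

lemma beta_one {l : ℕ} (hl : 1 ≤ l) {x : ℝ} (hx : |x| ≤ hh l) : beta l x = 1 := by
  have hh0 := hh_pos l
  have hh4 := hh_le hl
  apply Real.smoothTransition.one_of_one_le
  rw [le_div_iff₀ (beta_den hl), ← Real.cos_abs x]
  have := Real.cos_le_cos_of_nonneg_of_le_pi (abs_nonneg x) (by linarith) hx
  linarith

lemma beta_zero {l : ℕ} (hl : 1 ≤ l) {x : ℝ} (h1 : 3 * hh l ≤ x)
    (h2 : x ≤ 2 * Real.pi - 3 * hh l) : beta l x = 0 := by
  have hh0 := hh_pos l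
  have hh4 := hh_le hl
  apply Real.smoothTransition.zero_of_nonpos
  apply div_nonpos_of_nonpos_of_nonneg _ (beta_den hl).le
  rw [sub_nonpos]
  exact cos_le_mid (by linarith) (by linarith) h1 h2

/-! g -/
def gg (l : ℕ) (x : ℝ) : ℝ := Gam (Real.cos (LL l * x))

lemma gg_smooth (l : ℕ) : ContDiff ℝ (⊤ : ℕ∞) (gg l) :=
  Gam_smooth.comp (Real.contDiff_cos.comp (contDiff_const.mul contDiff_id))

lemma gg_nonneg (l : ℕ) (x : ℝ) : 0 ≤ gg l x := Gam_nonneg _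

lemma gg_le_one (l : ℕ) (x : ℝ) : gg l x ≤ 1 := Gam_le_one (Real.cos_le_one _)

lemma cosL_per (l : ℕ) (x : ℝ) :
    Real.cos (LL l * (x + 2 * Real.pi)) = Real.cos (LL l * x) := by
  have : LL l * (x + 2 * Real.pi) = LL l * x + ((l + 1 : ℕ) : ℝ) * (2 * Real.pi) := by
    unfold LL; push_cast; ring
  rw [this, Real.cos_add_nat_mul_two_pi]

lemma sinL_per (l : ℕ) (x : ℝ) :
    Real.sin (LL l * (x + 2 * Real.pi)) = Real.sin (LL l * x) := by
  have : LL l * (x + 2 * Real.pi) = LL l * x + ((l + 1 : ℕ) : ℝ) * (2 * Real.pi) := by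
    unfold LL; push_cast; ring
  rw [this, Real.sin_add_nat_mul_two_pi]

lemma cosL_refl (l : ℕ) (x : ℝ) :
    Real.cos (LL l * (2 * Real.pi - x)) = Real.cos (LL l * x) := by
  have := cosL_per l (-x)
  rw [show 2 * Real.pi - x = -x + 2 * Real.pi by ring, this, mul_neg, Real.cos_neg]

lemma cosL_nonpos {l : ℕ} {x : ℝ} (h1 : hh l ≤ x) (h2 : x ≤ 3 * hh l) :
    Real.cos (LL l * x) ≤ 0 := by
  have := LL_pos l
  have e := LLhh l
  apply Real.cos_nonpos_of_pi_div_two_le_of_le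
  · rw [← e]; exact mul_le_mul_of_nonneg_left h1 this.le
  · have : LL l * x ≤ LL l * (3 * hh l) := mul_le_mul_of_nonneg_left h2 this.le
    linarith

lemma gg_zero {l : ℕ} {x : ℝ} (h1 : hh l ≤ x) (h2 : x ≤ 3 * hh l) : gg l x = 0 :=
  Gam_zero (cosL_nonpos h1 h2)

lemma gg_refl (l : ℕ) (x : ℝ) : gg l (2 * Real.pi - x) = gg l x := by
  unfold gg; rw [cosL_refl]

lemma gg_even (l : ℕ) (x : ℝ) : gg l (-x) = gg l x := by
  unfold gg; rw [mul_neg, Real.cos_neg]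

lemma beta_gg {l : ℕ} (hl : 1 ≤ l) {x : ℝ} (h1 : hh l ≤ x) (h2 : x ≤ 2 * Real.pi - hh l) :
    beta l x * gg l x = 0 := by
  rcases le_total x (3 * hh l) with h | h
  · rw [gg_zero h1 h, mul_zero]
  rcases le_total x (2 * Real.pi - 3 * hh l) with h' | h'
  · rw [beta_zero hl h h', zero_mul]
  · rw [← gg_refl, gg_zero (by linarith) (by linarith), mul_zero]

lemma cosL_pos {l : ℕ} {x : ℝ} (h : |x| < hh l) : 0 < Real.cos (LL l * x) := by
  have h0 := LL_pos l
  have e := LLhh l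
  rw [abs_lt] at h
  apply Real.cos_pos_of_mem_Ioo
  constructor <;> nlinarith

/-! radius and phase -/
def rr (l : ℕ) (x : ℝ) : ℝ := 2 + (1 - 2 * beta l x) * gg l x

def ph (k l : ℕ) (x : ℝ) : ℝ :=
  x - (1 - beta l x) * (2 / LL l * Real.sin (LL l * x)) * gg l x + 2 * Real.pi * k * psi l x

lemma rr_smooth (l : ℕ) : ContDiff ℝ (⊤ : ℕ∞) (rr l) := by
  unfold rr
  have := beta_smooth l
  have := gg_smooth l
  fun_prop

lemma ph_smooth (k l : ℕ) : ContDiff ℝ (⊤ : ℕ∞) (ph k l) := by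
  unfold ph
  have := beta_smooth l
  have := gg_smooth l
  have := psi_smooth l
  fun_prop

lemma beta_even (l : ℕ) (x : ℝ) : beta l (-x) = beta l x := by simp [beta]

lemma beta_per (l : ℕ) (x : ℝ) : beta l (x + 2 * Real.pi) = beta l x := by simp [beta]

lemma gg_per (l : ℕ) (x : ℝ) : gg l (x + 2 * Real.pi) = gg l x := by
  unfold gg; rw [cosL_per]

lemma rr_even (l : ℕ) (x : ℝ) : rr l (-x) = rr l x := by simp [rr, beta_even, gg_even]

lemma rr_per (l : ℕ) (x : ℝ) : rr l (x + 2 * Real.pi) = rr l x := by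
  simp only [rr, beta_per, gg_per]

lemma ph_odd (k l : ℕ) (x : ℝ) : ph k l (-x) = - ph k l x := by
  simp only [ph, beta_even, gg_even, psi_odd, mul_neg, Real.sin_neg]
  ring

lemma ph_per (k : ℕ) {l : ℕ} (hl : 1 ≤ l) (x : ℝ) :
    ph k l (x + 2 * Real.pi) = ph k l x + (k + 1) * (2 * Real.pi) := by
  simp only [ph, beta_per, gg_per, psi_per hl, sinL_per]
  ring

lemma rr_pos (l : ℕ) (x : ℝ) : 0 < rr l x := by
  have h1 : 0 ≤ beta l x := Real.smoothTransition.nonneg _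
  have h2 : beta l x ≤ 1 := Real.smoothTransition.le_one _
  have h3 := gg_nonneg l x
  have h4 := gg_le_one l x
  unfold rr
  nlinarith

lemma rr_in {l : ℕ} (hl : 1 ≤ l) {x : ℝ} (hx : |x| ≤ hh l) : rr l x = 2 - gg l x := by
  unfold rr; rw [beta_one hl hx]; ring

lemma ph_in (k : ℕ) {l : ℕ} (hl : 1 ≤ l) {x : ℝ} (hx : |x| ≤ hh l) :
    ph k l x = x + 2 * Real.pi * k * psi l x := by
  unfold ph; rw [beta_one hl hx]; ring

lemma rr_mid {l : ℕ} (hl : 1 ≤ l) {x : ℝ} (h1 : hh l ≤ x) (h2 : x ≤ 2 * Real.pi - hh l) :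
    rr l x = 2 + gg l x := by
  have := beta_gg hl h1 h2
  unfold rr
  linear_combination (-2) * this

lemma ph_mid (k : ℕ) {l : ℕ} (hl : 1 ≤ l) {x : ℝ} (h1 : hh l ≤ x) (h2 : x ≤ 2 * Real.pi - hh l) :
    ph k l x = x - 2 / LL l * Real.sin (LL l * x) * gg l x + Real.pi * k := by
  have := beta_gg hl h1 h2
  unfold ph
  rw [psi_half hl h1 h2]
  linear_combination (2 / LL l * Real.sin (LL l * x)) * this

/-! derivatives -/
def rr' (l : ℕ) (x : ℝ) : ℝ := deriv (rr l) x
def ph' (k l : ℕ) (x : ℝ) : ℝ := deriv (ph k l) x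

lemma rr_deriv (l : ℕ) (x : ℝ) : HasDerivAt (rr l) (rr' l x) x :=
  ((rr_smooth l).differentiable (by simp) x).hasDerivAt

lemma ph_deriv (k l : ℕ) (x : ℝ) : HasDerivAt (ph k l) (ph' k l x) x :=
  ((ph_smooth k l).differentiable (by simp) x).hasDerivAt

lemma gg_deriv (l : ℕ) (x : ℝ) : HasDerivAt (gg l)
    (Gam' (Real.cos (LL l * x)) * (-(LL l * Real.sin (LL l * x)))) x := by
  have h1 : HasDerivAt (fun x => LL l * x) (LL l) x := by
    simpa using (hasDerivAt_id x).const_mul (LL l)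
  have h2 := (Gam_deriv _).comp x h1.cos
  convert! h2 using 1
  ring

lemma sinL_deriv (l : ℕ) (x : ℝ) : HasDerivAt (fun x => 2 / LL l * Real.sin (LL l * x))
    (2 * Real.cos (LL l * x)) x := by
  have h0 := (LL_pos l).ne'
  have h1 : HasDerivAt (fun x => LL l * x) (LL l) x := by
    simpa using (hasDerivAt_id x).const_mul (LL l)
  convert! h1.sin.const_mul (2 / LL l) using 1
  field_simp

lemma rr'_mid {l : ℕ} (hl : 1 ≤ l) {x : ℝ} (h1 : hh l < x) (h2 : x < 2 * Real.pi - hh l) :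
    rr' l x = Gam' (Real.cos (LL l * x)) * (-(LL l * Real.sin (LL l * x))) := by
  have e : rr l =ᶠ[nhds x] fun x => 2 + gg l x := by
    filter_upwards [Ioo_mem_nhds h1 h2] with y hy
    exact rr_mid hl hy.1.le hy.2.le
  exact (rr_deriv l x).unique (((gg_deriv l x).const_add 2).congr_of_eventuallyEq e)

lemma ph'_mid (k : ℕ) {l : ℕ} (hl : 1 ≤ l) {x : ℝ} (h1 : hh l < x) (h2 : x < 2 * Real.pi - hh l) :
    ph' k l x = 1 - 2 * (Real.cos (LL l * x) * Gam (Real.cos (LL l * x)) -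
      Real.sin (LL l * x) * (Gam' (Real.cos (LL l * x)) * Real.sin (LL l * x))) := by
  have h0 := (LL_pos l).ne'
  have e : ph k l =ᶠ[nhds x]
      fun x => x - 2 / LL l * Real.sin (LL l * x) * gg l x + Real.pi * k := by
    filter_upwards [Ioo_mem_nhds h1 h2] with y hy
    exact ph_mid k hl hy.1.le hy.2.le
  have h3 := (((hasDerivAt_id x).sub ((sinL_deriv l x).mul (gg_deriv l x))).add_const
    (Real.pi * k)).congr_of_eventuallyEq e
  rw [(ph_deriv k l x).unique h3]
  unfold gg
  field_simp
  ring

lemma rr'_in {l : ℕ} (hl : 1 ≤ l) {x : ℝ} (hx : |x| < hh l) :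
    rr' l x = Gam' (Real.cos (LL l * x)) * (LL l * Real.sin (LL l * x)) := by
  have e : rr l =ᶠ[nhds x] fun x => 2 - gg l x := by
    filter_upwards [Ioo_mem_nhds (abs_lt.1 hx).1 (abs_lt.1 hx).2] with y hy
    exact rr_in hl (abs_lt.2 hy).le
  rw [(rr_deriv l x).unique (((gg_deriv l x).const_sub 2).congr_of_eventuallyEq e)]
  ring

lemma ph'_in_pos (k : ℕ) {l : ℕ} (hl : 1 ≤ l) {x : ℝ} (hx : |x| < hh l) : 0 < ph' k l x := by
  have e : ph k l =ᶠ[nhds x] fun x => x + 2 * Real.pi * k * psi l x := by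
    filter_upwards [Ioo_mem_nhds (abs_lt.1 hx).1 (abs_lt.1 hx).2] with y hy
    exact ph_in k hl (abs_lt.2 hy).le
  rw [(ph_deriv k l x).unique (((hasDerivAt_id x).add
    ((psi_deriv l x).const_mul (2 * Real.pi * k))).congr_of_eventuallyEq e)]
  have := psi'_nonneg hl x
  have := Real.pi_pos
  positivity

/-- on plateaus -/
lemma ph'_flat_pos (k : ℕ) {l : ℕ} (hl : 1 ≤ l) {x : ℝ} (hx : Real.cos (LL l * x) ≤ 0) :
    0 < ph' k l x := by
  have hg : gg l x = 0 := Gam_zero hx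
  have hg' := gg_deriv l x
  rw [Gam'_zero hx, zero_mul] at hg'
  have hb : HasDerivAt (beta l) (deriv (beta l) x) x :=
    ((beta_smooth l).differentiable (by simp) x).hasDerivAt
  have h3 := ((hasDerivAt_id x).sub (((hb.const_sub 1).mul (sinL_deriv l x)).mul hg')).add
    ((psi_deriv l x).const_mul (2 * Real.pi * k))
  rw [(ph_deriv k l x).unique h3, hg]
  simp only [mul_zero, add_zero, sub_zero]
  have := psi'_nonneg hl x
  have := Real.pi_pos
  positivity

lemma ph'_D_pos (k : ℕ) {l : ℕ} (hl : 1 ≤ l) {x : ℝ} (hx : |x| ≤ 2 * hh l) : 0 < ph' k l x := by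
  rcases lt_or_ge (|x|) (hh l) with h | h
  · exact ph'_in_pos k hl h
  · apply ph'_flat_pos k hl
    have := cosL_nonpos (l := l) h (by linarith [hh_pos l])
    rw [← Real.cos_abs, abs_mul, abs_of_pos (LL_pos l)]
    exact this

lemma rr'_odd (l : ℕ) (x : ℝ) : rr' l (-x) = - rr' l x := by
  have h := (rr_deriv l (-x)).comp x (hasDerivAt_neg x)
  have e : rr l ∘ Neg.neg = rr l := by ext y; exact rr_even l y
  rw [e] at h
  have := h.unique (rr_deriv l x)
  linarith

lemma ph'_even (k l : ℕ) (x : ℝ) : ph' k l (-x) = ph' k l x := by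
  have h := (ph_deriv k l (-x)).comp x (hasDerivAt_neg x)
  have e : ph k l ∘ Neg.neg = fun y => - ph k l y := by ext y; exact ph_odd k l y
  rw [e] at h
  have := h.unique (ph_deriv k l x).neg
  linarith

lemma rr'_per (l : ℕ) (x : ℝ) : rr' l (x + 2 * Real.pi) = rr' l x := by
  have h := (rr_deriv l (x + 2 * Real.pi)).comp_add_const x (2 * Real.pi)
  have e : (fun y => rr l (y + 2 * Real.pi)) = rr l := by ext y; exact rr_per l y
  rw [e] at h
  exact h.unique (rr_deriv l x)

lemma ph'_per (k : ℕ) {l : ℕ} (hl : 1 ≤ l) (x : ℝ) : ph' k l (x + 2 * Real.pi) = ph' k l x := by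
  have h := (ph_deriv k l (x + 2 * Real.pi)).comp_add_const x (2 * Real.pi)
  have e : (fun y => ph k l (y + 2 * Real.pi)) = fun y => ph k l y + (k + 1) * (2 * Real.pi) := by
    ext y; exact ph_per k hl y
  rw [e] at h
  exact h.unique ((ph_deriv k l x).add_const _)

lemma imm_aux (k : ℕ) {l : ℕ} (hl : 1 ≤ l) {x : ℝ} (h0 : 0 ≤ x) (h2 : x ≤ 2 * Real.pi) :
    rr' l x ≠ 0 ∨ ph' k l x ≠ 0 := by
  have hh0 := hh_pos l
  have hh4 := hh_le hl
  rcases le_or_gt x (2 * hh l) with h | h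
  · right; exact (ph'_D_pos k hl (by rw [abs_of_nonneg h0]; exact h)).ne'
  rcases le_or_gt (2 * Real.pi - 2 * hh l) x with h' | h'
  · right
    rw [show x = (x - 2 * Real.pi) + 2 * Real.pi by ring, ph'_per k hl]
    exact (ph'_D_pos k hl (by rw [abs_le]; constructor <;> linarith)).ne'
  rcases le_or_gt (Real.cos (LL l * x)) 0 with hc | hc
  · right; exact (ph'_flat_pos k hl hc).ne'
  by_cases hs : Real.sin (LL l * x) = 0
  · right
    have hc1 : Real.cos (LL l * x) = 1 := by
      have := Real.sin_sq_add_cos_sq (LL l * x)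
      rw [hs] at this
      nlinarith
    rw [ph'_mid k hl (by linarith) (by linarith), hs, hc1, Gam_one]
    norm_num
  · left
    rw [rr'_mid hl (by linarith) (by linarith)]
    have := Gam'_pos hc
    have := LL_pos l
    simp only [ne_eq, mul_eq_zero, neg_eq_zero, not_or]
    exact ⟨by positivity, by positivity, hs⟩

def ZZ (k l : ℕ) (x : ℝ) : ℂ := (rr l x : ℂ) * Complex.exp ((ph k l x : ℂ) * Complex.I)

def ZZ' (k l : ℕ) (x : ℝ) : ℂ :=
  ((rr' l x : ℂ) + (rr l x * ph' k l x : ℝ) * Complex.I) *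
    Complex.exp ((ph k l x : ℂ) * Complex.I)

lemma ZZ_deriv (k l : ℕ) (x : ℝ) : HasDerivAt (ZZ k l) (ZZ' k l x) x := by
  have h1 := (rr_deriv l x).ofReal_comp
  have h2 := ((ph_deriv k l x).ofReal_comp.mul_const Complex.I).cexp
  have h3 := h1.mul h2
  refine h3.congr_deriv ?_
  unfold ZZ'
  push_cast
  ring

lemma ZZ_smooth (k l : ℕ) : ContDiff ℝ (⊤ : ℕ∞) (ZZ k l) := by
  have h1 : ContDiff ℝ (⊤ : ℕ∞) (fun x => (rr l x : ℂ)) :=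
    Complex.ofRealCLM.contDiff.comp (rr_smooth l)
  have h2 : ContDiff ℝ (⊤ : ℕ∞) (fun x => (ph k l x : ℂ)) :=
    Complex.ofRealCLM.contDiff.comp (ph_smooth k l)
  exact h1.mul ((h2.mul contDiff_const).cexp)

lemma ZZ_eq (k l : ℕ) (x y : ℝ) : ZZ k l x = ZZ k l y ↔
    rr l x = rr l y ∧ ∃ n : ℤ, ph k l x = ph k l y + n * (2 * Real.pi) := by
  constructor
  · intro h
    have hr : rr l x = rr l y := by
      have := congrArg norm h
      simpa [ZZ, Complex.norm_exp_ofReal_mul_I, abs_of_pos (rr_pos l x),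
        abs_of_pos (rr_pos l y)] using this
    refine ⟨hr, ?_⟩
    unfold ZZ at h
    rw [hr] at h
    have h0 : (rr l y : ℂ) ≠ 0 := by exact_mod_cast (rr_pos l y).ne'
    have h1 := mul_left_cancel₀ h0 h
    obtain ⟨n, hn⟩ := Complex.exp_eq_exp_iff_exists_int.1 h1
    refine ⟨n, ?_⟩
    have h2 := congrArg Complex.im hn
    simpa using h2
  · rintro ⟨hr, n, hn⟩
    unfold ZZ
    rw [hr]
    congr 1
    apply Complex.exp_eq_exp_iff_exists_int.2
    refine ⟨n, ?_⟩
    rw [hn]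
    push_cast
    ring

lemma ZZ_per (k : ℕ) {l : ℕ} (hl : 1 ≤ l) (x : ℝ) : ZZ k l (x + 2 * Real.pi) = ZZ k l x := by
  rw [ZZ_eq]
  refine ⟨rr_per l x, k + 1, ?_⟩
  rw [ph_per k hl]
  push_cast
  ring

lemma ZZ'_ne (k : ℕ) {l : ℕ} (hl : 1 ≤ l) {x : ℝ} (h0 : 0 ≤ x) (h2 : x ≤ 2 * Real.pi) :
    ZZ' k l x ≠ 0 := by
  unfold ZZ'
  refine mul_ne_zero ?_ (Complex.exp_ne_zero _)
  intro h
  have hre := congrArg Complex.re h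
  have him := congrArg Complex.im h
  simp [(rr_pos l x).ne'] at hre him
  rcases imm_aux k hl h0 h2 with h | h
  · exact h hre
  · exact h him

lemma ZZ'_per (k : ℕ) {l : ℕ} (hl : 1 ≤ l) : Function.Periodic (ZZ' k l) (2 * Real.pi) := by
  intro x
  have h := (ZZ_deriv k l (x + 2 * Real.pi)).comp_add_const x (2 * Real.pi)
  have e : (fun y => ZZ k l (y + 2 * Real.pi)) = ZZ k l := by ext y; exact ZZ_per k hl y
  rw [e] at h
  exact h.unique (ZZ_deriv k l x)

lemma ZZ'_ne_all (k : ℕ) {l : ℕ} (hl : 1 ≤ l) (x : ℝ) : ZZ' k l x ≠ 0 := by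
  obtain ⟨y, hy, e⟩ := (ZZ'_per k hl).exists_mem_Ico₀ Real.two_pi_pos x
  rw [e]
  exact ZZ'_ne k hl hy.1 hy.2.le

def cfun (k l : ℕ) (t : ℝ) : ℂ := ZZ k l (2 * Real.pi * t)

lemma cfun_deriv (k l : ℕ) (t : ℝ) :
    HasDerivAt (cfun k l) ((2 * Real.pi : ℝ) * ZZ' k l (2 * Real.pi * t)) t := by
  have h1 : HasDerivAt (fun t => 2 * Real.pi * t) (2 * Real.pi) t := by
    simpa using (hasDerivAt_id t).const_mul (2 * Real.pi)
  have h2 := (ZZ_deriv k l (2 * Real.pi * t)).scomp t h1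
  exact h2.congr_deriv (by simp)

def ccur (k l : ℕ) (hl : 1 ≤ l) : PlanarCurve where
  toFun := cfun k l
  periodic := by
    intro t
    unfold cfun
    rw [mul_add, mul_one, ZZ_per k hl]
  smooth := (ZZ_smooth k l).comp (contDiff_const.mul contDiff_id)
  immersion := by
    intro t
    rw [(cfun_deriv k l t).deriv]
    refine mul_ne_zero ?_ (ZZ'_ne_all k hl _)
    exact_mod_cast Real.two_pi_pos.ne'

lemma det2_ZZ (k l : ℕ) {x y : ℝ} (h : ZZ k l x = ZZ k l y) :
    det2 ((2 * Real.pi : ℝ) * ZZ' k l x) ((2 * Real.pi : ℝ) * ZZ' k l y) =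
      (2 * Real.pi) ^ 2 * (rr l x * (rr' l x * ph' k l y - ph' k l x * rr' l y)) := by
  obtain ⟨hr, n, hn⟩ := (ZZ_eq k l x y).1 h
  have he : Complex.exp ((ph k l x : ℂ) * Complex.I) = Complex.exp ((ph k l y : ℂ) * Complex.I) := by
    apply Complex.exp_eq_exp_iff_exists_int.2
    refine ⟨n, ?_⟩
    rw [hn]
    push_cast
    ring
  unfold ZZ' det2
  rw [he, ← hr, Complex.exp_mul_I, ← Complex.ofReal_cos, ← Complex.ofReal_sin]
  simp only [Complex.mul_re, Complex.mul_im, Complex.add_re, Complex.add_im, Complex.ofReal_re,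
    Complex.ofReal_im, Complex.I_re, Complex.I_im, mul_zero, mul_one, zero_mul, sub_zero, add_zero,
    zero_add]
  have := Real.sin_sq_add_cos_sq (ph k l y)
  linear_combination ((2 * Real.pi) ^ 2 * (rr l x * (rr' l x * ph' k l y - ph' k l x * rr' l y))) * this

lemma ph_strict (k : ℕ) {l : ℕ} (hl : 1 ≤ l) {x y : ℝ} (h0 : 0 ≤ x) (hxy : x < y) (hy : y ≤ hh l) :
    ph k l x < ph k l y := by
  rw [ph_in k hl (abs_le.2 ⟨by linarith, by linarith⟩), ph_in k hl (abs_le.2 ⟨by linarith, by linarith⟩)]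
  have := mul_le_mul_of_nonneg_left (psi_mono hl hxy.le)
    (show 0 ≤ 2 * Real.pi * k by have := Real.pi_pos; positivity)
  linarith

lemma ph_zero (k : ℕ) {l : ℕ} (hl : 1 ≤ l) : ph k l 0 = 0 := by
  rw [ph_in k hl (by simpa using (hh_pos l).le), psi_zero]; ring

lemma ph_hh (k : ℕ) {l : ℕ} (hl : 1 ≤ l) : ph k l (hh l) = hh l + Real.pi * k := by
  have := hh_pos l
  have := hh_le hl
  rw [ph_in k hl (abs_le.2 ⟨by linarith, by linarith⟩), psi_half hl le_rfl (by linarith)]; ring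

lemma exists_X (k : ℕ) {l : ℕ} (hl : 1 ≤ l) : ∃ X : ℕ → ℝ, ∀ i < k,
    0 < X i ∧ X i < hh l ∧ ph k l (X i) = (i + 1) * Real.pi := by
  have : ∀ i : ℕ, ∃ x : ℝ, i < k → 0 < x ∧ x < hh l ∧ ph k l x = (i + 1) * Real.pi := by
    intro i
    by_cases hi : i < k
    · have h0 := hh_pos l
      have hc : ContinuousOn (ph k l) (Icc 0 (hh l)) := (ph_smooth k l).continuous.continuousOn
      have hi' : (i : ℝ) + 1 ≤ k := by exact_mod_cast hi
      have hp := Real.pi_pos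
      obtain ⟨x, hx, e⟩ := intermediate_value_Ioo h0.le hc
        (show ((i : ℝ) + 1) * Real.pi ∈ Ioo (ph k l 0) (ph k l (hh l)) by
          rw [ph_zero k hl, ph_hh k hl]
          exact ⟨by positivity, by nlinarith⟩)
      exact ⟨x, fun _ => ⟨hx.1, hx.2, e⟩⟩
    · exact ⟨0, fun h => absurd h hi⟩
  choose X hX using this
  exact ⟨X, hX⟩

lemma rr_D_lt {l : ℕ} (hl : 1 ≤ l) {x : ℝ} (hx : |x| < hh l) : rr l x < 2 := by
  rw [rr_in hl hx.le]
  have := Gam_pos (cosL_pos hx)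
  unfold gg; linarith

lemma rr_D_lt' {l : ℕ} (hl : 1 ≤ l) {x : ℝ} (h1 : 2 * Real.pi - hh l < x) (h2 : x < 2 * Real.pi) :
    rr l x < 2 := by
  have := rr_per l (x - 2 * Real.pi)
  rw [sub_add_cancel] at this
  rw [this]
  have := hh_pos l
  exact rr_D_lt hl (abs_lt.2 ⟨by linarith, by linarith⟩)

lemma rr_mid_ge {l : ℕ} (hl : 1 ≤ l) {x : ℝ} (h1 : hh l ≤ x) (h2 : x ≤ 2 * Real.pi - hh l) :
    2 ≤ rr l x := by
  rw [rr_mid hl h1 h2]; have := gg_nonneg l x; linarith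

lemma rr_D_inj {l : ℕ} (hl : 1 ≤ l) {x y : ℝ} (hx0 : 0 ≤ x) (hx : x < hh l)
    (hy0 : 0 ≤ y) (hy : y < hh l) (h : rr l x = rr l y) : x = y := by
  have hx' : |x| < hh l := abs_lt.2 ⟨by linarith, hx⟩
  have hy' : |y| < hh l := abs_lt.2 ⟨by linarith, hy⟩
  rw [rr_in hl hx'.le, rr_in hl hy'.le] at h
  have h1 : Gam (Real.cos (LL l * x)) = Gam (Real.cos (LL l * y)) := by
    unfold gg at h; linarith
  have h2 := Gam_inj (Gam_pos (cosL_pos hx')) h1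
  have hL := LL_pos l
  have e := LLhh l
  have hp := Real.pi_pos
  have h3 := Real.injOn_cos ⟨by positivity, by nlinarith⟩ ⟨by positivity, by nlinarith⟩ h2
  exact mul_left_cancel₀ hL.ne' h3

lemma rr_refl (l : ℕ) (x : ℝ) : rr l (2 * Real.pi - x) = rr l x := by
  have := rr_per l (-x)
  rw [show 2 * Real.pi - x = -x + 2 * Real.pi by ring, this, rr_even]

lemma ph_refl (k : ℕ) {l : ℕ} (hl : 1 ≤ l) (x : ℝ) :
    ph k l (2 * Real.pi - x) = - ph k l x + (k + 1) * (2 * Real.pi) := by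
  have := ph_per k hl (-x)
  rw [show 2 * Real.pi - x = -x + 2 * Real.pi by ring, this, ph_odd]

set_option maxHeartbeats 1000000 in
lemma coin_mid (k : ℕ) {l : ℕ} (hl : 1 ≤ l) {y0 : ℝ} (hy0 : 0 < y0) (hy0p : y0 < Real.pi / 2)
    (ey0 : y0 = 2 * Real.sin y0 * Gam (Real.cos y0)) {x y : ℝ} (hx : hh l ≤ x) (hxy : x < y)
    (hy : y ≤ 2 * Real.pi - hh l) (h : ZZ k l x = ZZ k l y) :
    ∃ j < l, 4 * hh l * (j + 1) - y0 / LL l = x ∧ 4 * hh l * (j + 1) + y0 / LL l = y := by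
  have hL := LL_pos l
  have hL2 := LL_two hl
  have hh0 := hh_pos l
  have hLh := LLhh l
  have hp := Real.pi_pos
  have hp3 := Real.pi_gt_three
  obtain ⟨hr, n, hn⟩ := (ZZ_eq k l x y).1 h
  rw [rr_mid hl hx (by linarith), rr_mid hl (by linarith) hy] at hr
  rw [ph_mid k hl hx (by linarith), ph_mid k hl (by linarith) hy] at hn
  have hg : gg l x = gg l y := by linarith
  have hno : ∀ m : ℤ, x - y = m * (2 * Real.pi) → False := by
    intro m hm
    have h1 : (m : ℝ) < 0 := by
      by_contra hc; push Not at hc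
      nlinarith
    have h2 : (-1 : ℝ) < m := by
      by_contra hc; push Not at hc
      nlinarith
    have h1' : m < 0 := by exact_mod_cast h1
    have h2' : -1 < m := by exact_mod_cast h2
    omega
  rcases (gg_nonneg l x).eq_or_lt with hz | hpos
  · exfalso
    rw [← hg, ← hz] at hn
    exact hno n (by linarith)
  have hcos : Real.cos (LL l * x) = Real.cos (LL l * y) := Gam_inj hpos hg
  have hcpos : 0 < Real.cos (LL l * x) := Gam_pos_iff.1 hpos
  have hsin2 : Real.sin (LL l * y) = Real.sin (LL l * x) ∨
      Real.sin (LL l * y) = - Real.sin (LL l * x) := by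
    apply sq_eq_sq_iff_eq_or_eq_neg.1
    rw [Real.sin_sq, Real.sin_sq, hcos]
  rw [← hg] at hn
  rcases hsin2 with hs | hs
  · exfalso
    rw [hs] at hn
    exact hno n (by linarith)
  rw [hs] at hn
  set e := 2 / LL l * Real.sin (LL l * x) * gg l x with he
  have hw : (y - x) / 2 = - e - Real.pi * n := by
    have : 2 / LL l * -Real.sin (LL l * x) * gg l x = - e := by rw [he]; ring
    rw [this] at hn
    linarith
  have hLe : LL l * e = 2 * Real.sin (LL l * x) * gg l x := by
    rw [he]; field_simp
  set w := (y - x) / 2 with hwdef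
  have hw0 : 0 < w := by rw [hwdef]; linarith
  have hwp : w ≤ Real.pi - hh l := by rw [hwdef]; linarith
  have habs : |LL l * e| ≤ 2 := by
    rw [hLe, abs_mul, abs_mul, abs_of_pos hpos]
    have h1 := Real.abs_sin_le_one (LL l * x)
    have h2 := gg_le_one l x
    have h3 := abs_nonneg (Real.sin (LL l * x))
    rw [abs_two]
    nlinarith
  have habs' := abs_le.1 habs
  -- sum of parameters
  have hsum : Real.cos (LL l * x + LL l * y) = 1 := by
    rw [Real.cos_add, hs, ← hcos]
    have := Real.sin_sq_add_cos_sq (LL l * x)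
    nlinarith
  obtain ⟨N, hN⟩ := (Real.cos_eq_one_iff _).1 hsum
  have hxN : LL l * x = N * Real.pi - LL l * w := by
    rw [hwdef]; linarith
  have hyN : LL l * y = N * Real.pi + LL l * w := by
    rw [hwdef]; linarith
  have hn1 : n = 0 ∨ n = -1 := by
    have hepi : |e| ≤ 1 := by
      have h1 : |LL l * e| = LL l * |e| := by rw [abs_mul, abs_of_pos hL]
      rw [h1] at habs
      by_contra hc; push Not at hc
      have := mul_lt_mul_of_pos_left hc hL
      linarith
    have := abs_le.1 hepi
    have h1 : (n : ℝ) < 1 := by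
      by_contra hc; push Not at hc
      have := mul_le_mul_of_nonneg_left hc hp.le
      linarith
    have h2 : (-2 : ℝ) < n := by
      by_contra hc; push Not at hc
      have := mul_le_mul_of_nonneg_left hc hp.le
      linarith
    have h1' : n < 1 := by exact_mod_cast h1
    have h2' : -2 < n := by exact_mod_cast h2
    omega
  rcases hn1 with rfl | rfl
  · have hwe : w = - e := by rw [hw]; simp
    have hLw : LL l * w = - (2 * Real.sin (LL l * x) * gg l x) := by rw [← hLe, hwe]; ring
    have hLw2 : LL l * w ≤ 2 := by rw [hwe]; linarith
    have hLw0 : 0 < LL l * w := by positivity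
    have hsw : 0 < Real.sin (LL l * w) := Real.sin_pos_of_pos_of_lt_pi hLw0 (by linarith)
    rcases Int.even_or_odd N with hev | hod
    · obtain ⟨M, hM⟩ := hev
      have hxM : LL l * x = - (LL l * w) + M * (2 * Real.pi) := by
        rw [hxN, hM]; push_cast; ring
      have hsx : Real.sin (LL l * x) = - Real.sin (LL l * w) := by
        rw [hxM, Real.sin_add_int_mul_two_pi, Real.sin_neg]
      have hcx : Real.cos (LL l * x) = Real.cos (LL l * w) := by
        rw [hxM, Real.cos_add_int_mul_two_pi, Real.cos_neg]
      have hwh : LL l * w < Real.pi / 2 := by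
        by_contra hc; push Not at hc
        have := Real.cos_nonpos_of_pi_div_two_le_of_le hc (by linarith)
        linarith
      have hy := y0_unique hy0 hy0p hLw0 hwh ey0 (by
        rw [hsx] at hLw
        unfold gg at hLw
        rw [hcx] at hLw
        linarith)
      have hwy : y0 / LL l = w := by rw [hy]; field_simp
      have hc : 4 * hh l * M = (x + y) / 2 := by
        apply mul_left_cancel₀ hL.ne'
        have : LL l * ((x + y) / 2) = M * (2 * Real.pi) := by
          have : LL l * ((x+y)/2) = LL l * x + LL l * w := by rw [hwdef]; ring
          rw [this, hxM]; ring
        rw [this]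
        linear_combination 4 * M * hLh
      have hM0 : 0 < M := by
        have : (0 : ℝ) < M := by
          by_contra hcc; push Not at hcc
          nlinarith
        exact_mod_cast this
      have hMl : M < l + 1 := by
        have h2 : LL l * (4 * hh l) = 2 * Real.pi := by linear_combination 4 * hLh
        have : (M : ℝ) < LL l := by
          by_contra hcc; push Not at hcc
          have : LL l * (4 * hh l) ≤ M * (4 * hh l) := by
            apply mul_le_mul_of_nonneg_right hcc; positivity
          linarith
        unfold LL at this
        exact_mod_cast this
      refine ⟨(M - 1).toNat, by omega, ?_⟩
      have hcast : (((M - 1).toNat : ℕ) : ℝ) + 1 = M := by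
        have : (((M - 1).toNat : ℕ) : ℤ) = M - 1 := Int.toNat_of_nonneg (by omega)
        have : (((M - 1).toNat : ℕ) : ℝ) = ((M - 1 : ℤ) : ℝ) := by exact_mod_cast this
        rw [this]; push_cast; ring
      rw [hcast, hc, hwy, hwdef]
      constructor <;> ring
    · exfalso
      obtain ⟨M, hM⟩ := hod
      have hxM : LL l * x = (Real.pi - LL l * w) + M * (2 * Real.pi) := by
        rw [hxN, hM]; push_cast; ring
      have hsx : Real.sin (LL l * x) = Real.sin (LL l * w) := by
        rw [hxM, Real.sin_add_int_mul_two_pi, Real.sin_pi_sub]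
      rw [hsx] at hLw
      nlinarith [mul_pos hsw hpos]
  · exfalso
    have hwe : e = Real.pi - w := by push_cast at hw; linarith
    set v := Real.pi - w with hv
    have hvh : hh l ≤ v := by linarith
    have hLv : Real.pi / 2 ≤ LL l * v := by rw [← hLh]; exact mul_le_mul_of_nonneg_left hvh hL.le
    rw [hwe] at habs' hLe
    have hsv : 0 < Real.sin (LL l * v) := Real.sin_pos_of_pos_of_lt_pi (by linarith) (by linarith)
    have hcv := Real.cos_nonpos_of_pi_div_two_le_of_le hLv (by linarith)
    have hLc : LL l = ((l + 1 : ℤ) : ℝ) := by unfold LL; push_cast; ring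
    have hxv : LL l * x = LL l * v + (N - (l + 1 : ℤ) : ℤ) * Real.pi := by
      rw [hxN, hv]; push_cast; rw [hLc]; push_cast; ring
    rcases Int.even_or_odd (N - (l + 1 : ℤ)) with hev | hod
    · obtain ⟨M, hM⟩ := hev
      have hxM : LL l * x = LL l * v + M * (2 * Real.pi) := by
        rw [hxv, hM]; push_cast; ring
      rw [hxM, Real.cos_add_int_mul_two_pi] at hcpos
      linarith
    · obtain ⟨M, hM⟩ := hod
      have hxM : LL l * x = (LL l * v + Real.pi) + M * (2 * Real.pi) := by
        rw [hxv, hM]; push_cast; ring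
      have : Real.sin (LL l * x) = - Real.sin (LL l * v) := by
        rw [hxM, Real.sin_add_int_mul_two_pi, Real.sin_add_pi]
      rw [this] at hLe
      nlinarith [mul_pos hsv hpos]

lemma Ucent {l : ℕ} {j : ℕ} (hj : j < l) {y0 : ℝ} (hy0 : 0 < y0) (hy0p : y0 < Real.pi / 2) :
    0 < y0 / LL l ∧ y0 / LL l < hh l ∧ hh l < 4 * hh l * (j + 1) - y0 / LL l ∧
    4 * hh l * (j + 1) + y0 / LL l < 2 * Real.pi - hh l := by
  have hL := LL_pos l
  have hh0 := hh_pos l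
  have hLh := LLhh l
  have h1 : y0 / LL l < hh l := by rw [div_lt_iff₀ hL]; linarith
  have h2 : LL l * (4 * hh l) = 2 * Real.pi := by linear_combination 4 * hLh
  have hj' : (j : ℝ) + 1 ≤ l := by exact_mod_cast hj
  have hj0 : (0 : ℝ) ≤ j := by positivity
  have h3 : 4 * hh l * (j + 1) ≤ 4 * hh l * l := mul_le_mul_of_nonneg_left hj' (by positivity)
  unfold LL at h2
  refine ⟨by positivity, h1, by nlinarith, by nlinarith⟩

lemma Utrig {l : ℕ} (j : ℕ) (y0 : ℝ) :
    Real.cos (LL l * (4 * hh l * (j + 1) - y0 / LL l)) = Real.cos y0 ∧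
    Real.sin (LL l * (4 * hh l * (j + 1) - y0 / LL l)) = - Real.sin y0 ∧
    Real.cos (LL l * (4 * hh l * (j + 1) + y0 / LL l)) = Real.cos y0 ∧
    Real.sin (LL l * (4 * hh l * (j + 1) + y0 / LL l)) = Real.sin y0 := by
  have hL := LL_pos l
  have hLh := LLhh l
  have hd : LL l * (y0 / LL l) = y0 := by field_simp
  have e1 : LL l * (4 * hh l * (j + 1) - y0 / LL l) = - y0 + (j + 1 : ℕ) * (2 * Real.pi) := by
    push_cast; linear_combination 4 * (j + 1) * hLh - hd
  have e2 : LL l * (4 * hh l * (j + 1) + y0 / LL l) = y0 + (j + 1 : ℕ) * (2 * Real.pi) := by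
    push_cast; linear_combination 4 * (j + 1) * hLh + hd
  rw [e1, e2]
  simp only [Real.cos_add_nat_mul_two_pi, Real.sin_add_nat_mul_two_pi, Real.cos_neg, Real.sin_neg,
    and_self]

lemma coin_U (k : ℕ) {l : ℕ} (hl : 1 ≤ l) {y0 : ℝ} (hy0 : 0 < y0) (hy0p : y0 < Real.pi / 2)
    (ey0 : y0 = 2 * Real.sin y0 * Gam (Real.cos y0)) {j : ℕ} (hj : j < l) :
    ZZ k l (4 * hh l * (j + 1) - y0 / LL l) = ZZ k l (4 * hh l * (j + 1) + y0 / LL l) := by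
  obtain ⟨h1, h2, h3, h4⟩ := Ucent hj hy0 hy0p
  obtain ⟨t1, t2, t3, t4⟩ := Utrig (l := l) j y0
  have hL := LL_pos l
  have hc : 4 * hh l * (j + 1) - y0 / LL l < 4 * hh l * (j + 1) + y0 / LL l := by linarith
  rw [ZZ_eq, rr_mid hl h3.le (hc.trans h4).le, rr_mid hl (h3.trans hc).le h4.le,
    ph_mid k hl h3.le (hc.trans h4).le, ph_mid k hl (h3.trans hc).le h4.le]
  unfold gg
  rw [t1, t2, t3, t4]
  refine ⟨rfl, 0, ?_⟩
  have : y0 / LL l = 2 / LL l * Real.sin y0 * Gam (Real.cos y0) := by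
    rw [show 2 / LL l * Real.sin y0 * Gam (Real.cos y0) = (2 * Real.sin y0 * Gam (Real.cos y0)) / LL l by ring,
      ← ey0]
  push_cast
  linear_combination -2 * this

lemma coin_iff (k : ℕ) {l : ℕ} (hl : 1 ≤ l) {y0 : ℝ} (hy0 : 0 < y0) (hy0p : y0 < Real.pi / 2)
    (ey0 : y0 = 2 * Real.sin y0 * Gam (Real.cos y0)) (X : ℕ → ℝ)
    (hX : ∀ i < k, 0 < X i ∧ X i < hh l ∧ ph k l (X i) = (i + 1) * Real.pi)
    {x y : ℝ} (hx : 0 ≤ x) (hxy : x < y) (hy : y < 2 * Real.pi) :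
    ZZ k l x = ZZ k l y ↔ (∃ i < k, X i = x ∧ 2 * Real.pi - X i = y) ∨
      (∃ j < l, 4 * hh l * (j + 1) - y0 / LL l = x ∧ 4 * hh l * (j + 1) + y0 / LL l = y) := by
  have hh0 := hh_pos l
  have hh4 := hh_le hl
  have hp := Real.pi_pos
  constructor
  · intro h
    obtain ⟨hr, n, hn⟩ := (ZZ_eq k l x y).1 h
    rcases lt_or_ge x (hh l) with hxD | hxM
    · have hx2 := rr_D_lt hl (abs_lt.2 ⟨by linarith, hxD⟩)
      rcases lt_or_ge y (hh l) with hyD | hyM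
      · exact absurd (rr_D_inj hl hx hxD (by linarith) hyD hr) hxy.ne
      rcases le_or_gt y (2 * Real.pi - hh l) with hyM2 | hyD
      · have := rr_mid_ge hl hyM hyM2
        linarith
      · left
        rw [← rr_refl l y] at hr
        have hxy' := rr_D_inj hl hx hxD (by linarith) (by linarith) hr
        have hyx : y = 2 * Real.pi - x := by linarith
        have hx0 : 0 < x := by linarith
        rw [hyx, ph_refl k hl] at hn
        have e : ph k l x = ((k + 1 + n : ℤ) : ℝ) * Real.pi := by push_cast; linarith
        have l1 := ph_strict k hl le_rfl hx0 hxD.le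
        have l2 := ph_strict k hl hx hxD le_rfl
        rw [ph_zero k hl, e] at l1
        rw [ph_hh k hl, e] at l2
        have m1 : (0 : ℝ) < ((k + 1 + n : ℤ) : ℝ) := by
          by_contra hc; push Not at hc
          nlinarith
        have m2 : ((k + 1 + n : ℤ) : ℝ) < ((k + 1 : ℤ) : ℝ) := by
          by_contra hc; push Not at hc
          have := mul_le_mul_of_nonneg_right hc hp.le
          push_cast at this l2
          linarith
        have m1' : 0 < k + 1 + n := by exact_mod_cast m1
        have m2' : k + 1 + n < (k + 1 : ℤ) := by exact_mod_cast m2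
        obtain ⟨i, hi⟩ := Int.eq_ofNat_of_zero_le (show 0 ≤ k + n by omega)
        have hik : i < k := by omega
        have e2 : ph k l x = (i + 1) * Real.pi := by
          rw [e, show (k + 1 + n : ℤ) = (i : ℤ) + 1 by omega]; push_cast; ring
        obtain ⟨a1, a2, a3⟩ := hX i hik
        have : X i = x := by
          rcases lt_trichotomy (X i) x with hlt | heq | hgt
          · have := ph_strict k hl a1.le hlt hxD.le
            linarith
          · exact heq
          · have := ph_strict k hl hx hgt a2.le
            linarith
        exact ⟨i, hik, this, by rw [this, hyx]⟩
    rcases le_or_gt x (2 * Real.pi - hh l) with hxM2 | hxD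
    · have hx2 := rr_mid_ge hl hxM hxM2
      rcases le_or_gt y (2 * Real.pi - hh l) with hyM2 | hyD
      · right
        exact coin_mid k hl hy0 hy0p ey0 hxM hxy hyM2 h
      · have := rr_D_lt' hl hyD hy
        linarith
    · rw [← rr_refl l y, ← rr_refl l x] at hr
      have := rr_D_inj hl (by linarith) (by linarith) (by linarith) (by linarith) hr
      linarith
  · rintro (⟨i, hi, rfl, rfl⟩ | ⟨j, hj, rfl, rfl⟩)
    · obtain ⟨a1, a2, a3⟩ := hX i hi
      rw [ZZ_eq, rr_refl, ph_refl k hl, a3]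
      refine ⟨rfl, (i : ℤ) - k, ?_⟩
      push_cast
      ring
    · exact coin_U k hl hy0 hy0p ey0 hj

lemma det_D (k : ℕ) {l : ℕ} (hl : 1 ≤ l) {x : ℝ} (h0 : 0 < x) (h1 : x < hh l) :
    0 < rr l x * (rr' l x * ph' k l (2 * Real.pi - x) - ph' k l x * rr' l (2 * Real.pi - x)) := by
  have hx' : |x| < hh l := abs_lt.2 ⟨by linarith, h1⟩
  have hL := LL_pos l
  have e := LLhh l
  have hp := Real.pi_pos
  rw [show 2 * Real.pi - x = -x + 2 * Real.pi by ring, ph'_per k hl, rr'_per, rr'_odd, ph'_even]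
  have hph := ph'_in_pos k hl hx'
  have hs : 0 < Real.sin (LL l * x) :=
    Real.sin_pos_of_pos_of_lt_pi (by positivity) (by nlinarith)
  have hr : 0 < rr' l x := by
    rw [rr'_in hl hx']
    have := Gam'_pos (cosL_pos hx')
    positivity
  have := rr_pos l x
  have h3 : rr' l x * ph' k l x - ph' k l x * -rr' l x = 2 * (rr' l x * ph' k l x) := by ring
  rw [h3]
  positivity

lemma det_U (k : ℕ) {l : ℕ} (hl : 1 ≤ l) {y0 : ℝ} (hy0 : 0 < y0) (hy0p : y0 < Real.pi / 2)
    (ey0 : y0 = 2 * Real.sin y0 * Gam (Real.cos y0)) {j : ℕ} (hj : j < l) {x y : ℝ}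
    (hx : x = 4 * hh l * (j + 1) - y0 / LL l) (hy : y = 4 * hh l * (j + 1) + y0 / LL l) :
    0 < rr l x * (rr' l x * ph' k l y - ph' k l x * rr' l y) := by
  obtain ⟨h1, h2, h3, h4⟩ := Ucent hj hy0 hy0p
  obtain ⟨t1, t2, t3, t4⟩ := Utrig (l := l) j y0
  rw [← hx] at h3 t1 t2
  rw [← hy] at h4 t3 t4
  have hL := LL_pos l
  have hc : x < y := by linarith
  rw [rr'_mid hl h3 (hc.trans h4), rr'_mid hl (h3.trans hc) h4,
    ph'_mid k hl h3 (hc.trans h4), ph'_mid k hl (h3.trans hc) h4, t1, t2, t3, t4]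
  have hd := y0_deriv hy0 hy0p ey0
  have hcp : 0 < Real.cos y0 := Real.cos_pos_of_mem_Ioo ⟨by linarith, hy0p⟩
  have hs : 0 < Real.sin y0 := Real.sin_pos_of_pos_of_lt_pi hy0 (by linarith)
  have hG := Gam'_pos hcp
  have := rr_pos l x
  apply mul_pos this
  set D := 1 - 2 * (Real.cos y0 * Gam (Real.cos y0) -
    Real.sin y0 * (Gam' (Real.cos y0) * Real.sin y0)) with hD
  have : 0 < Gam' (Real.cos y0) * (LL l * Real.sin y0) * D := by positivity
  have e : 1 - 2 * (Real.cos y0 * Gam (Real.cos y0) -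
    -Real.sin y0 * (Gam' (Real.cos y0) * -Real.sin y0)) = D := by rw [hD]; ring
  rw [e]
  linarith

lemma rr'_cont (l : ℕ) : Continuous (rr' l) := (rr_smooth l).continuous_deriv (by simp)

lemma ph'_cont (k l : ℕ) : Continuous (ph' k l) := (ph_smooth k l).continuous_deriv (by simp)

def tau (l : ℕ) (x : ℝ) : ℝ :=
  max Real.pi (min (LL l * x) (2 * Real.pi * LL l - Real.pi)) - Real.pi

lemma tau_cont (l : ℕ) : Continuous (tau l) := by
  unfold tau
  fun_prop

def ww (k l : ℕ) (x : ℝ) : ℂ := ⟨rr' l x, rr l x * ph' k l x⟩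

def qq (k l : ℕ) (x : ℝ) : ℂ :=
  ⟨rr' l x * Real.sin (tau l x) + rr l x * ph' k l x * Real.cos (tau l x),
    rr l x * ph' k l x * Real.sin (tau l x) - rr' l x * Real.cos (tau l x)⟩

lemma qq_cont (k l : ℕ) : Continuous (qq k l) := by
  have h1 := rr'_cont l
  have h2 := ph'_cont k l
  have h3 := tau_cont l
  have h4 := (rr_smooth l).continuous
  have e : qq k l = fun x => ((rr' l x * Real.sin (tau l x) + rr l x * ph' k l x * Real.cos (tau l x) : ℝ) : ℂ) +
      ((rr l x * ph' k l x * Real.sin (tau l x) - rr' l x * Real.cos (tau l x) : ℝ) : ℂ) * Complex.I := by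
    ext x
    apply Complex.ext <;> simp only [qq, Complex.add_re, Complex.add_im, Complex.ofReal_re,
      Complex.ofReal_im, Complex.re_ofReal_mul, Complex.im_ofReal_mul, Complex.I_re, Complex.I_im] <;> ring
  rw [e]
  fun_prop

lemma tau_lo {l : ℕ} {x : ℝ} (h : LL l * x ≤ Real.pi) : tau l x = 0 := by
  unfold tau
  rw [max_eq_left ((min_le_left _ _).trans h), sub_self]

lemma tau_hi {l : ℕ} (hl : 1 ≤ l) {x : ℝ} (h : 2 * Real.pi * LL l - Real.pi ≤ LL l * x) :
    tau l x = l * (2 * Real.pi) := by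
  have := LL_two hl
  have hp := Real.pi_pos
  unfold tau
  rw [min_eq_right h, max_eq_right (by nlinarith)]
  unfold LL; ring

lemma tau_mid {l : ℕ} {x : ℝ} (h1 : Real.pi ≤ LL l * x) (h2 : LL l * x ≤ 2 * Real.pi * LL l - Real.pi) :
    tau l x = LL l * x - Real.pi := by
  unfold tau
  rw [min_eq_left h2, max_eq_right h1]

lemma qq_slit (k : ℕ) {l : ℕ} (hl : 1 ≤ l) {x : ℝ} (h0 : 0 ≤ x) (h2 : x ≤ 2 * Real.pi) :
    qq k l x ∈ Complex.slitPlane := by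
  have hL := LL_pos l
  have hh0 := hh_pos l
  have hh4 := hh_le hl
  have hLh := LLhh l
  have hp := Real.pi_pos
  have hr := rr_pos l x
  rw [Complex.mem_slitPlane_iff]
  rcases le_or_gt x (2 * hh l) with hx1 | hx1
  · left
    have hlo : LL l * x ≤ Real.pi := by nlinarith
    have := ph'_D_pos k hl (show |x| ≤ 2 * hh l from abs_le.2 ⟨by linarith, hx1⟩)
    simp only [qq, tau_lo hlo, Real.sin_zero, Real.cos_zero]
    have := mul_pos hr this
    linarith
  rcases le_or_gt (2 * Real.pi - 2 * hh l) x with hx2 | hx2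
  · left
    have hhi : 2 * Real.pi * LL l - Real.pi ≤ LL l * x := by nlinarith
    have := ph'_D_pos k hl (show |x - 2 * Real.pi| ≤ 2 * hh l from abs_le.2 ⟨by linarith, by linarith⟩)
    have e := ph'_per k hl (x - 2 * Real.pi)
    rw [sub_add_cancel] at e
    rw [← e] at this
    simp only [qq, tau_hi hl hhi, Real.cos_nat_mul_two_pi]
    have hs : Real.sin (l * (2 * Real.pi)) = 0 := by
      have := Real.sin_nat_mul_pi (l * 2)
      push_cast at this
      rw [← mul_assoc]; exact this
    rw [hs]
    have := mul_pos hr this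
    linarith
  have ht := tau_mid (l := l) (x := x) (by nlinarith) (by nlinarith)
  have ea := rr'_mid hl (show hh l < x by linarith) (show x < 2 * Real.pi - hh l by linarith)
  have eb := ph'_mid k hl (show hh l < x by linarith) (show x < 2 * Real.pi - hh l by linarith)
  have himm := imm_aux k hl h0 h2
  have hG := Gam'_nonneg (Real.cos (LL l * x))
  have hfl := fun h => ph'_flat_pos (l := l) k hl (x := x) h
  by_contra hcon
  push Not at hcon
  obtain ⟨c1, c2⟩ := hcon
  simp only [qq, ht, Real.sin_sub_pi, Real.cos_sub_pi] at c1 c2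
  set s := Real.sin (LL l * x) with hs
  set c := Real.cos (LL l * x) with hc
  set B := rr l x * ph' k l x with hB
  have hsc : s ^ 2 + c ^ 2 = 1 := Real.sin_sq_add_cos_sq _
  set lam := Gam' c * LL l with hlam
  have hlam0 : 0 ≤ lam := mul_nonneg hG hL.le
  have ea' : rr' l x = - (lam * s) := by rw [ea, hlam]; ring
  by_cases hs0 : s = 0
  · have hc2 : c = 1 ∨ c = -1 := by
      rw [hs0] at hsc
      apply sq_eq_sq_iff_eq_or_eq_neg.1
      linarith
    rw [hs0] at c1
    rcases hc2 with h | h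
    · rw [h, hs0, Gam_one] at eb
      have : B = - rr l x := by rw [hB, eb]; ring
      rw [this, h] at c1
      linarith
    · have h3 := mul_pos hr (hfl (by rw [h]; norm_num))
      rw [← hB] at h3
      rw [h] at c1
      linarith
  · have hBc : B = - (lam * c) := by
      rw [ea'] at c2
      apply mul_right_cancel₀ hs0
      linarith
    rw [ea', hBc] at c1
    have : lam ≤ 0 := by
      have : lam = lam * (s ^ 2 + c ^ 2) := by rw [hsc, mul_one]
      linarith
    have hl0 : lam = 0 := le_antisymm this hlam0
    rw [hl0] at ea' hBc
    rcases himm with h | h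
    · exact h (by rw [ea']; ring)
    · apply h
      have : rr l x * ph' k l x = 0 := by rw [← hB, hBc]; ring
      exact (mul_eq_zero.1 this).resolve_left hr.ne'

def thet (k l : ℕ) (x : ℝ) : ℝ := ph k l x + Real.pi / 2 - tau l x + (qq k l x).arg

lemma ww_eq (k l : ℕ) (x : ℝ) :
    ww k l x = Complex.I * Complex.exp (((-tau l x : ℝ) : ℂ) * Complex.I) * qq k l x := by
  rw [Complex.exp_mul_I, ← Complex.ofReal_cos, ← Complex.ofReal_sin, Real.cos_neg, Real.sin_neg]
  have := Real.sin_sq_add_cos_sq (tau l x)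
  apply Complex.ext
  · simp only [ww, qq, Complex.mul_re, Complex.mul_im, Complex.add_re, Complex.add_im,
      Complex.ofReal_re, Complex.ofReal_im, Complex.I_re, Complex.I_im]
    linear_combination (-rr' l x) * this
  · simp only [ww, qq, Complex.mul_re, Complex.mul_im, Complex.add_re, Complex.add_im,
      Complex.ofReal_re, Complex.ofReal_im, Complex.I_re, Complex.I_im]
    linear_combination (-(rr l x * ph' k l x)) * this

lemma norm_ww (k l : ℕ) (x : ℝ) : ‖ww k l x‖ = ‖qq k l x‖ := by
  rw [ww_eq, norm_mul, norm_mul, Complex.norm_exp_ofReal_mul_I, Complex.norm_I]; ring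

lemma ZZ'_ww (k l : ℕ) (x : ℝ) : ZZ' k l x = ww k l x * Complex.exp ((ph k l x : ℂ) * Complex.I) := by
  unfold ZZ'
  congr 1
  apply Complex.ext <;> simp [ww]

lemma ZZ'_polar (k l : ℕ) (x : ℝ) :
    ZZ' k l x = (‖ZZ' k l x‖ : ℂ) * Complex.exp ((thet k l x : ℂ) * Complex.I) := by
  have hn : ‖ZZ' k l x‖ = ‖qq k l x‖ := by
    rw [ZZ'_ww, norm_mul, Complex.norm_exp_ofReal_mul_I, norm_ww, mul_one]
  have hq := Complex.norm_mul_exp_arg_mul_I (qq k l x)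
  have he : Complex.exp ((thet k l x : ℂ) * Complex.I) =
      Complex.exp ((ph k l x : ℂ) * Complex.I) * (Complex.I *
        Complex.exp (((-tau l x : ℝ) : ℂ) * Complex.I)) *
        Complex.exp (((qq k l x).arg : ℂ) * Complex.I) := by
    have hI := Complex.exp_pi_div_two_mul_I
    conv_rhs => rw [show ∀ a b c : ℂ, a * (Complex.I * b) * c = a * (Complex.exp (Real.pi / 2 * Complex.I) * b) * c from fun a b c => by rw [hI]]
    rw [← Complex.exp_add, ← Complex.exp_add, ← Complex.exp_add]
    congr 1
    unfold thet
    push_cast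
    ring
  rw [hn, he, ZZ'_ww, ww_eq]
  nth_rewrite 1 [← hq]
  ring

lemma ccur_whitney (k l : ℕ) (hl : 1 ≤ l) : (ccur k l hl).HasWhitney ((k : ℤ) + 1 - l) := by
  have hp := Real.pi_pos
  have hL := LL_two hl
  apply whitney_of_Icc _ _ (fun t => thet k l (2 * Real.pi * t))
  · have h1 : ContinuousOn (fun t : ℝ => (qq k l (2 * Real.pi * t)).arg) (Icc 0 1) := by
      intro t ht
      apply ContinuousAt.continuousWithinAt
      have hs := qq_slit k hl (x := 2 * Real.pi * t) (by have := ht.1; positivity)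
        (by nlinarith [ht.2])
      have h2 : ContinuousAt (fun t : ℝ => qq k l (2 * Real.pi * t)) t :=
        ((qq_cont k l).comp (by fun_prop : Continuous fun t : ℝ => 2 * Real.pi * t)).continuousAt
      exact ContinuousAt.comp (f := fun t : ℝ => qq k l (2 * Real.pi * t)) (g := Complex.arg)
        (Complex.continuousAt_arg hs) h2
    have h2 : Continuous (fun t : ℝ => ph k l (2 * Real.pi * t) + Real.pi / 2 -
        tau l (2 * Real.pi * t)) := by
      have a := (ph_smooth k l).continuous
      have b := tau_cont l
      fun_prop
    exact h2.continuousOn.add h1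
  · intro t _
    have hd : deriv (ccur k l hl).toFun t = _ := (cfun_deriv k l t).deriv
    rw [hd, norm_mul]
    nth_rewrite 1 [ZZ'_polar]
    rw [Complex.norm_real, Real.norm_of_nonneg Real.two_pi_pos.le]
    push_cast
    ring
  · have e0 : tau l 0 = 0 := tau_lo (by simpa using hp.le)
    have e1 : tau l (2 * Real.pi) = l * (2 * Real.pi) := tau_hi hl (by linarith)
    have hs : Real.sin (l * (2 * Real.pi)) = 0 := by
      have := Real.sin_nat_mul_pi (l * 2)
      push_cast at this
      rw [← mul_assoc]; exact this
    have r0 := rr_per l 0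
    have r1 := rr'_per l 0
    have r2 := ph'_per k hl 0
    have r3 := ph_per k hl 0
    rw [zero_add] at r0 r1 r2 r3
    have eq : qq k l (2 * Real.pi) = qq k l 0 := by
      unfold qq
      rw [e0, e1, hs, Real.cos_nat_mul_two_pi, r0, r1, r2, Real.sin_zero, Real.cos_zero]
    simp only [mul_one, mul_zero]
    unfold thet
    rw [eq, e0, e1, r3]
    push_cast
    ring

lemma ccur_partA (k l : ℕ) (hl : 1 ≤ l) :
    (ccur k l hl).Stable ∧ (ccur k l hl).crossings = k + l ∧ PlanarCurve.fX (ccur k l hl) =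
      (∑ i ∈ Finset.range k, FreeAbelianGroup.of ((l + i : ℤ), ((i : ℤ) + 1 - k))) +
        (l : ℤ) • FreeAbelianGroup.of ((0 : ℤ), (l : ℤ) - 1 - k) := by
  obtain ⟨y0, hy0, hy0p, ey0⟩ := exists_y0
  obtain ⟨X, hX⟩ := exists_X k hl
  have hp := Real.two_pi_pos
  have hh0 := hh_pos l
  have hh4 := hh_le hl
  have hU := fun j (hj : j < l) => Ucent hj hy0 hy0p
  have key : ∀ u : ℝ, 2 * Real.pi * (u / (2 * Real.pi)) = u := by
    intro u; field_simp
  have key2 : ∀ u : ℝ, 2 * Real.pi * (1 - u / (2 * Real.pi)) = 2 * Real.pi - u := by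
    intro u; field_simp
  have key3 : ∀ u v : ℝ, u / (2 * Real.pi) = v ↔ u = 2 * Real.pi * v := by
    intro u v; rw [div_eq_iff hp.ne', mul_comm]
  have key4 : ∀ u v : ℝ, 1 - u / (2 * Real.pi) = v ↔ 2 * Real.pi - u = 2 * Real.pi * v := by
    intro u v
    rw [← key2 u]
    exact (mul_right_inj' hp.ne').symm
  have key5 : ∀ u : ℝ, 1 - u / (2 * Real.pi) = (2 * Real.pi - u) / (2 * Real.pi) := by
    intro u; field_simp
  have hd : ∀ t, deriv (ccur k l hl).toFun t = _ := fun t => (cfun_deriv k l t).deriv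
  have hXX : ∀ i j, i < j → j < k → X i < X j := by
    intro i j hij hj
    obtain ⟨a1, a2, a3⟩ := hX i (hij.trans hj)
    obtain ⟨b1, b2, b3⟩ := hX j hj
    have hpi := Real.pi_pos
    have hij' : (i : ℝ) < j := by exact_mod_cast hij
    rcases lt_trichotomy (X i) (X j) with h | h | h
    · exact h
    · rw [h, b3] at a3
      nlinarith
    · have := ph_strict k hl b1.le h a2.le
      rw [a3, b3] at this
      nlinarith
  apply partA (ccur k l hl) k l (fun i => X i / (2 * Real.pi))
    (fun j => (4 * hh l * (j + 1) - y0 / LL l) / (2 * Real.pi))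
    (fun j => (4 * hh l * (j + 1) + y0 / LL l) / (2 * Real.pi))
  · intro i hi
    have := (hX i hi).1
    positivity
  · intro i hi
    have := (hX i hi).2.1
    rw [div_lt_iff₀ hp]; linarith
  · intro i j hij hj
    exact div_lt_div_of_pos_right (hXX i j hij hj) hp
  · intro i hi j hj
    have := (hX i hi).2.1
    have := hU j hj
    exact div_lt_div_of_pos_right (by linarith) hp
  · intro j hj
    have := hU j hj
    apply div_pos _ hp
    linarith
  · intro j hj
    have := hU j hj
    exact div_lt_div_of_pos_right (by linarith) hp
  · intro j hj
    have := hU j hj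
    rw [div_lt_one hp]; linarith
  · intro i j hij hj
    have := hU i (hij.trans hj)
    have hij' : (i : ℝ) + 1 ≤ j := by exact_mod_cast hij
    apply div_lt_div_of_pos_right _ hp
    nlinarith
  · intro i hi j hj
    have := (hX i hi).2.1
    have := hU j hj
    rw [key5]
    exact div_lt_div_of_pos_right (by linarith) hp
  · intro p q hp0 hpq hq1
    have h := coin_iff k hl hy0 hy0p ey0 X hX (x := 2 * Real.pi * p) (y := 2 * Real.pi * q)
      (by positivity) (by nlinarith) (by nlinarith)
    simp only [key3, key4]
    exact h
  · intro i hi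
    obtain ⟨a1, a2, a3⟩ := hX i hi
    rw [hd, hd, key, key2, det2_ZZ k l
      ((coin_iff k hl hy0 hy0p ey0 X hX a1.le (by linarith) (by linarith)).2
        (Or.inl ⟨i, hi, rfl, rfl⟩))]
    have := det_D k hl a1 a2
    positivity
  · intro j hj
    have := hU j hj
    rw [hd, hd, key, key, det2_ZZ k l (coin_U k hl hy0 hy0p ey0 hj)]
    have := det_U k hl hy0 hy0p ey0 hj rfl rfl
    positivity

/-- For integers `n ≥ ω ≥ 0` of opposite parity, with
`k = (n + ω - 1)/2` and `l = (n - ω + 1)/2`, the curve `c_{ω,n}` (with `k` crossings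
along its middle horizontal line and `l` empty outward 1-gons along its outer circle) is
a stable planar curve with exactly `n` crossings and Whitney winding number `ω`, and
`f^X(c_{ω,n}) = Σ_{i=1}^{k} X_{l+i-1, i-k} + l·X_{0, l-1-k}`. -/
theorem statement15 (ω n : ℤ) (h0 : 0 ≤ ω) (hn : ω ≤ n) (hpar : Odd (n + ω))
    (k l : ℤ) (hk : k = (n + ω - 1) / 2) (hl : l = (n - ω + 1) / 2) :
    ∃ c : PlanarCurve, c.Stable ∧ (c.crossings : ℤ) = n ∧ c.HasWhitney ω ∧
      PlanarCurve.fX c =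
        (∑ i ∈ Finset.range k.toNat,
          FreeAbelianGroup.of ((l + i : ℤ), ((i : ℤ) + 1 - k))) +
        l • FreeAbelianGroup.of ((0 : ℤ), l - 1 - k) := by
  have hodd : (n + ω) % 2 = 1 := Int.odd_iff.1 hpar
  obtain ⟨K, rfl⟩ := Int.eq_ofNat_of_zero_le (show 0 ≤ k by omega)
  obtain ⟨M, rfl⟩ := Int.eq_ofNat_of_zero_le (show 0 ≤ l by omega)
  have hM : 1 ≤ M := by omega
  obtain ⟨h1, h2, h3⟩ := ccur_partA K M hM
  have hw := ccur_whitney K M hM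
  refine ⟨ccur K M hM, h1, ?_, ?_, ?_⟩
  · rw [h2]; push_cast; omega
  · have : (K : ℤ) + 1 - M = ω := by omega
    rw [← this]; exact hw
  · rw [h3, Int.toNat_natCast]

end CurvePaper
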